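/- arXiv:2311.11788 — 2 statements merged into one kernel-verified Lean document; each statement's English description precedes it below -/
import Mathlib

section
/- Let Γ₁, Γ₂ ⊆ ℕ^r be affine semigroups whose join Γ = Γ₁ ⊔ Γ₂ is defined (i.e., they are minimally generated by disjoint sets 𝒢₁, 𝒢₂ with extremal rays E_{Γ₁}, E_{Γ₂}, and E_{Γ₁} ∪ E_{Γ₂} is linearly independent over ℚ). Then Γ has a strongly indispensable minimal free resolution (SIFR) if and only if both Γ₁ and Γ₂ have SIFRs. -/
/-!
Linear independence of the extremal rays makes the sum `Γ = Γ₁ + Γ₂` direct (`isDirect_of_rays`),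
and this is the only way the rays enter. A minimal resolution is handled as one based differential
module (`BRes`): a finite set of generators with homological and `Γ`-degrees and a single square
matrix, exact except for `K[Γ]` at the generator of homological degree `0`.

If `Γ` has a strongly indispensable resolution, so have `Γ₁` and `Γ₂`, because each `Γᵢ` is a face
of `Γ`: a monomial whose degree lies in `Γᵢ` only involves the variables of `Γᵢ`. Hence the
generators with degree in `Γᵢ`, with the corresponding block of the differential, form a minimal
resolution of `K[Γᵢ]` (`BRes.restrict`); its degrees are among those of `Γ`, so the condition on
differences is inherited.

Conversely, the tensor product over `K` of minimal resolutions of `K[Γ₁]` and `K[Γ₂]` is a minimal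
resolution of `K[Γ]` (`BRes.join`). Over the field `K` each resolution is contracted onto a space of
normal forms modulo its toric ideal by a homotopy that anticommutes with the sign operator
(`exists_odd_homotopy`); the Künneth homotopy (`tensor_homotopy`) then contracts the tensor product
onto products of normal forms, and those are linearly independent modulo the toric ideal of `Γ`
because the sum is direct. For strong indispensability (`BRes.join_SI`), suppose that
`(p, q)` and `(p', q')` are distinct generators of the same total homological degree with the
degree of the first in `Γ` above that of the second. Directness gives the same relation
in each factor. One of the two factors has homological degree at most that of its partner, and
walking down the differential from the partner to the same homological degree contradicts strong
indispensability of that factor (`BRes.SI.not_above`); if the generators of one factor coincide,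
those of the other factor are distinct and of equal homological degree.
-/

open MvPolynomial

noncomputable section

set_option synthInstance.maxHeartbeats 1000000
set_option maxHeartbeats 1000000

/-- The affine semigroup of `ℕ^d` generated by `a₁,…,a_n`. -/
def affSemigroup {n d : ℕ} (a : Fin n → Fin d → ℕ) : AddSubmonoid (Fin d → ℕ) :=
  AddSubmonoid.closure (Set.range a)

/-- `v` lies in the rational polyhedral cone generated by `a₁,…,a_n`. -/
def inCone {n d : ℕ} (a : Fin n → Fin d → ℕ) (v : Fin d → ℕ) : Prop :=
  ∃ c : Fin n → ℚ, (∀ i, 0 ≤ c i) ∧ ∀ j, (v j : ℚ) = ∑ i, c i * (a i j : ℚ)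

/-- `ℋ(Γ) = (Cone(Γ) \ Γ) ∩ ℕ^d`, the set of holes of the affine semigroup. -/
def holes {n d : ℕ} (a : Fin n → Fin d → ℕ) : Set (Fin d → ℕ) :=
  {v | inCone a v ∧ v ∉ affSemigroup a}

/-- The pseudo-Frobenius elements of the affine semigroup generated by `a`. -/
def pseudoFrobenius {n d : ℕ} (a : Fin n → Fin d → ℕ) : Set (Fin d → ℕ) :=
  {f | f ∈ holes a ∧ ∀ γ ∈ affSemigroup a, γ ≠ 0 → f + γ ∈ affSemigroup a}

/-- The toric (defining) ideal of the semigroup ring `K[Γ]`: the kernel of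
`K[x₁,…,x_n] → K[t₁,…,t_d]`, `x_i ↦ t^{a_i}`. -/
def toricIdeal (K : Type*) [Field K] {n d : ℕ} (a : Fin n → Fin d → ℕ) :
    Ideal (MvPolynomial (Fin n) K) :=
  RingHom.ker (MvPolynomial.aeval
      (fun i => MvPolynomial.monomial (Finsupp.equivFunOnFinite.symm (a i)) (1 : K)) :
    MvPolynomial (Fin n) K →ₐ[K] MvPolynomial (Fin d) K)

/-- The `Γ`-degree of an exponent vector: `e ↦ Σ eᵢ • aᵢ ∈ ℕ^d`. -/
def gammaDeg {n d : ℕ} (a : Fin n → Fin d → ℕ) (e : Fin n →₀ ℕ) : Fin d → ℕ :=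
  ∑ i, e i • a i

/-- A (finite) minimal `Γ`-graded free resolution of the semigroup ring
`K[Γ] = K[x₁,…,x_n]/I_Γ` over the polynomial ring `R = K[x₁,…,x_n]`:
`⋯ → R^{β₂} → R^{β₁} → R^{β₀} = R → K[Γ] → 0`,
where the `i`-th free module `R^{βᵢ}` has generators of `Γ`-degrees `deg i j`, the
differentials are given by matrices `mat i` whose entries are `Γ`-homogeneous of the
appropriate degrees and lie in the graded maximal ideal (minimality), and the complex
is exact. -/
structure MinFreeRes (K : Type*) [Field K] {n d : ℕ} (a : Fin n → Fin d → ℕ) where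
  /-- the Betti numbers -/
  β : ℕ → ℕ
  β0 : β 0 = 1
  /-- the resolution has finite length -/
  bdd : ∃ N, ∀ i, N ≤ i → β i = 0
  /-- the `Γ`-degrees of the generators (the `i`-Betti `Γ`-degrees) -/
  deg : (i : ℕ) → Fin (β i) → (Fin d → ℕ)
  deg0 : ∀ j, deg 0 j = 0
  /-- the matrix of the differential `R^{β_{i+1}} → R^{βᵢ}`;
  `mat i j j'` is the entry with source generator `j` and target generator `j'` -/
  mat : (i : ℕ) → Fin (β (i + 1)) → Fin (β i) → MvPolynomial (Fin n) K
  /-- the differentials are `Γ`-graded -/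
  homog : ∀ i j j', ∀ e ∈ (mat i j j').support,
    deg (i + 1) j = gammaDeg a e + deg i j'
  /-- minimality: all entries lie in the maximal ideal `(x₁,…,x_n)` -/
  minimal : ∀ i j j', MvPolynomial.coeff 0 (mat i j j') = 0
  /-- exactness at homological degree `0`: the kernel of the augmentation
  `R^{β₀} → K[Γ] = R/I_Γ` is the image of the first differential -/
  exact_zero :
    LinearMap.ker ((toricIdeal K a).mkQ ∘ₗ
        (LinearMap.lsum (MvPolynomial (Fin n) K)
            (fun _ : Fin (β 0) => MvPolynomial (Fin n) K) ℕ)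
          fun _ => LinearMap.id) =
      LinearMap.range (Matrix.mulVecLin (Matrix.of fun j' j => mat 0 j j'))
  /-- exactness at all higher homological degrees -/
  exact_succ : ∀ i,
    LinearMap.ker (Matrix.mulVecLin (Matrix.of fun j' j => mat i j j')) =
      LinearMap.range (Matrix.mulVecLin (Matrix.of fun j' j => mat (i + 1) j j'))

/-- The length (projective dimension of `K[Γ]`) of a minimal free resolution. -/
def MinFreeRes.pd {K : Type*} [Field K] {n d : ℕ} {a : Fin n → Fin d → ℕ}
    (F : MinFreeRes K a) : ℕ :=
  sSup {i | F.β i ≠ 0}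

/-- The multiset `ℬᵢ` of `i`-Betti `Γ`-degrees of a minimal free resolution. -/
def MinFreeRes.Betti {K : Type*} [Field K] {n d : ℕ} {a : Fin n → Fin d → ℕ}
    (F : MinFreeRes K a) (i : ℕ) : Multiset (Fin d → ℕ) :=
  Multiset.map (F.deg i) Finset.univ.val

/-- `Γ` is a maximal projective dimension (MPD) semigroup:
`pd_R K[Γ] = n − 1`, i.e. some (hence any) minimal graded free resolution of `K[Γ]`
has length `n − 1`. -/
def IsMPD (K : Type*) [Field K] {n d : ℕ} (a : Fin n → Fin d → ℕ) : Prop :=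
  ∃ F : MinFreeRes K a, F.pd = n - 1

/-- The strong indispensability condition for a minimal graded free resolution:
`±(b − b′) ∉ Γ` for all `i`-Betti `Γ`-degrees `b, b′ ∈ ℬᵢ(Γ)`, `1 ≤ i ≤ pd(Γ)`. -/
def SIFRCond {K : Type*} [Field K] {n d : ℕ} {a : Fin n → Fin d → ℕ}
    (F : MinFreeRes K a) : Prop :=
  ∀ i, 1 ≤ i → i ≤ F.pd → ∀ j j' : Fin (F.β i), j ≠ j' →
    ∀ γ ∈ affSemigroup a, F.deg i j ≠ γ + F.deg i j'

/-- `Γ` has a strongly indispensable minimal free resolution (SIFR). -/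
def HasSIFR (K : Type*) [Field K] {n d : ℕ} (a : Fin n → Fin d → ℕ) : Prop :=
  ∃ F : MinFreeRes K a, SIFRCond F

/-! ### Degrees of monomials and the toric ideal -/

section Degrees

variable {K : Type*} [Field K] {n d : ℕ} {a : Fin n → Fin d → ℕ}

lemma gammaDeg_zero (a : Fin n → Fin d → ℕ) : gammaDeg a 0 = 0 := by
  simp [gammaDeg]

lemma gammaDeg_add (a : Fin n → Fin d → ℕ) (e f : Fin n →₀ ℕ) :
    gammaDeg a (e + f) = gammaDeg a e + gammaDeg a f := by
  simp [gammaDeg, add_smul, Finset.sum_add_distrib]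

lemma gammaDeg_single (a : Fin n → Fin d → ℕ) (i : Fin n) (k : ℕ) :
    gammaDeg a (Finsupp.single i k) = k • a i := by
  rw [gammaDeg, Finset.sum_eq_single i]
  · simp
  · intro b _ hb
    simp [Finsupp.single_eq_of_ne hb]
  · simp

lemma gammaDeg_mem (a : Fin n → Fin d → ℕ) (e : Fin n →₀ ℕ) :
    gammaDeg a e ∈ affSemigroup a :=
  AddSubmonoid.sum_mem _ fun i _ =>
    AddSubmonoid.nsmul_mem _ (AddSubmonoid.subset_closure (Set.mem_range_self i)) _

lemma exists_gammaDeg {v : Fin d → ℕ} (hv : v ∈ affSemigroup a) :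
    ∃ e, gammaDeg a e = v := by
  induction hv using AddSubmonoid.closure_induction with
  | mem x hx =>
    obtain ⟨i, rfl⟩ := hx
    exact ⟨Finsupp.single i 1, by simp [gammaDeg_single]⟩
  | zero => exact ⟨0, gammaDeg_zero a⟩
  | add x y _ _ hx hy =>
    obtain ⟨e, rfl⟩ := hx
    obtain ⟨f, rfl⟩ := hy
    exact ⟨e + f, gammaDeg_add a e f⟩

lemma gammaDeg_eq_zero (ha : ∀ i, a i ≠ 0) {e : Fin n →₀ ℕ} (he : gammaDeg a e = 0) :
    e = 0 := by
  ext i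
  have h1 : e i • a i = 0 := by
    have := (Finset.sum_eq_zero_iff_of_nonneg (s := Finset.univ) (f := fun i => e i • a i)
      (fun i _ => zero_le)).1 he
    exact this i (Finset.mem_univ i)
  rcases smul_eq_zero.1 h1 with h | h
  · exact h
  · exact absurd h (ha i)

lemma gammaDeg_mapDomain {m : ℕ} (a : Fin n → Fin d → ℕ) (f : Fin m → Fin n)
    (e : Fin m →₀ ℕ) : gammaDeg a (e.mapDomain f) = gammaDeg (a ∘ f) e := by
  induction e using Finsupp.induction_linear with
  | zero => simp [gammaDeg_zero]
  | add x y hx hy => simp [Finsupp.mapDomain_add, gammaDeg_add, hx, hy]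
  | single i k => simp [Finsupp.mapDomain_single, gammaDeg_single]

/-- The algebra map `K[x₁,…,x_n] → K[t₁,…,t_d]`, `x_i ↦ t^{a_i}`, whose kernel is the
toric ideal. -/
def toricMap (K : Type*) [Field K] (a : Fin n → Fin d → ℕ) :
    MvPolynomial (Fin n) K →ₐ[K] MvPolynomial (Fin d) K :=
  MvPolynomial.aeval
    (fun i => MvPolynomial.monomial (Finsupp.equivFunOnFinite.symm (a i)) (1 : K))

lemma mem_toricIdeal {p : MvPolynomial (Fin n) K} :
    p ∈ toricIdeal K a ↔ toricMap K a p = 0 := Iff.rfl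

lemma toricMap_monomial (a : Fin n → Fin d → ℕ) (e : Fin n →₀ ℕ) :
    toricMap K a (monomial e 1) =
      monomial (Finsupp.equivFunOnFinite.symm (gammaDeg a e)) (1 : K) := by
  induction e using Finsupp.induction_linear with
  | zero =>
    rw [gammaDeg_zero]
    have : (Finsupp.equivFunOnFinite.symm (0 : Fin d → ℕ)) = 0 := by ext; simp
    rw [this, ← C_apply, ← C_apply, map_one, map_one, map_one]
  | add x y hx hy =>
    have h1 : (monomial (x + y) (1 : K) : MvPolynomial (Fin n) K) =
      monomial x 1 * monomial y 1 := by rw [monomial_mul, one_mul]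
    have h2 : (Finsupp.equivFunOnFinite.symm (gammaDeg a (x + y))) =
      Finsupp.equivFunOnFinite.symm (gammaDeg a x) +
        Finsupp.equivFunOnFinite.symm (gammaDeg a y) := by
      ext; simp [gammaDeg_add]
    rw [h1, map_mul, hx, hy, h2, monomial_mul, one_mul]
  | single i k =>
    rw [gammaDeg_single, toricMap, aeval_monomial, Finsupp.prod_single_index (by simp),
      monomial_pow]
    simp only [map_one, one_mul, one_pow]
    congr 1
    congr 1
    ext; simp

lemma toricMap_rename {m : ℕ} (a : Fin n → Fin d → ℕ) (f : Fin m → Fin n)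
    (p : MvPolynomial (Fin m) K) :
    toricMap K a (rename f p) = toricMap K (a ∘ f) p := by
  rw [toricMap, aeval_rename]
  rfl

end Degrees

/-! ### Resolutions as a single differential module -/

/-- A minimal graded free resolution of `K[Γ]`, packaged as one based differential module:
a finite set `J` of generators, each with a homological degree `h` and a `Γ`-degree `s`, and
one square matrix `D` (`D j j'` is the coefficient of `j'` in the differential of `j`).
The generator `o` is the one of homological degree `0`; exactness is required of the total
module at once, with the toric ideal as the image in the `o`-component. -/
structure BRes (K : Type*) [Field K] {n d : ℕ} (a : Fin n → Fin d → ℕ)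
    (J : Type) [Fintype J] where
  h : J → ℕ
  s : J → Fin d → ℕ
  D : J → J → MvPolynomial (Fin n) K
  o : J
  h_eq_zero : ∀ j, h j = 0 ↔ j = o
  s_o : s o = 0
  hD : ∀ j j', D j j' ≠ 0 → h j = h j' + 1
  homog : ∀ j j', ∀ e ∈ (D j j').support, s j = gammaDeg a e + s j'
  minimal : ∀ j j', coeff 0 (D j j') = 0
  exact : ∀ v : J → MvPolynomial (Fin n) K,
    ((∀ j', ∑ j, D j j' * v j = 0) ∧ v o ∈ toricIdeal K a) ↔
      ∃ w : J → MvPolynomial (Fin n) K, ∀ k, v k = ∑ j, D j k * w j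

/-- Strong indispensability in terms of `BRes`: two distinct generators in the same homological
degree have `Γ`-incomparable degrees. -/
def BRes.SI {K : Type*} [Field K] {n d : ℕ} {a : Fin n → Fin d → ℕ}
    {J : Type} [Fintype J] (B : BRes K a J) : Prop :=
  ∀ j j', j ≠ j' → B.h j = B.h j' → ∀ γ ∈ affSemigroup a, B.s j ≠ γ + B.s j'

section Convert

variable {K : Type*} [Field K] {n d : ℕ} {a : Fin n → Fin d → ℕ}

lemma MinFreeRes.finite_gens (F : MinFreeRes K a) : Finite (Σ i, Fin (F.β i)) := by
  obtain ⟨N, hN⟩ := F.bdd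
  have hlt : ∀ x : Σ i, Fin (F.β i), x.1 < N := by
    rintro ⟨i, j⟩
    by_contra h
    have := hN i (not_lt.1 h)
    exact absurd j.2 (by omega)
  let f : (Σ i, Fin (F.β i)) → Σ i : Fin N, Fin (F.β i) :=
    fun x => ⟨⟨x.1, hlt x⟩, x.2⟩
  refine Finite.of_injective f ?_
  rintro ⟨i, j⟩ ⟨i', j'⟩ h
  simp only [f, Sigma.mk.injEq, Fin.mk.injEq] at h
  obtain ⟨h1, h2⟩ := h
  subst h1
  simpa using h2

lemma MinFreeRes.le_pd (F : MinFreeRes K a) {i : ℕ} (j : Fin (F.β i)) : i ≤ F.pd := by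
  obtain ⟨N, hN⟩ := F.bdd
  refine le_csSup ⟨N, ?_⟩ ?_
  · intro k hk
    by_contra h
    exact hk (hN k (le_of_not_ge h))
  · intro h
    exact absurd j.2 (by omega)

/-- The total differential of a `MinFreeRes`. -/
def MinFreeRes.totD (F : MinFreeRes K a) (x y : Σ i, Fin (F.β i)) :
    MvPolynomial (Fin n) K :=
  if h : x.1 = y.1 + 1 then F.mat y.1 (Fin.cast (by rw [h]) x.2) y.2 else 0

lemma MinFreeRes.totD_succ (F : MinFreeRes K a) (i : ℕ) (j : Fin (F.β (i + 1)))
    (j' : Fin (F.β i)) : F.totD ⟨i + 1, j⟩ ⟨i, j'⟩ = F.mat i j j' := by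
  simp [MinFreeRes.totD]

lemma MinFreeRes.sum_totD (F : MinFreeRes K a) [Fintype (Σ i, Fin (F.β i))]
    (v : (Σ i, Fin (F.β i)) → MvPolynomial (Fin n) K) (i : ℕ) (j' : Fin (F.β i)) :
    ∑ x, F.totD x ⟨i, j'⟩ * v x = ∑ j, F.mat i j j' * v ⟨i + 1, j⟩ := by
  symm
  refine Fintype.sum_of_injective (fun j : Fin (F.β (i + 1)) =>
    (⟨i + 1, j⟩ : Σ i, Fin (F.β i))) ?_ _ _ ?_ ?_
  · intro j k h
    simpa using h
  · rintro ⟨k, j⟩ hk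
    have : k ≠ i + 1 := by
      rintro rfl
      exact hk ⟨j, rfl⟩
    simp [MinFreeRes.totD, this]
  · intro j
    rw [F.totD_succ]

lemma mem_ker_aug {β : ℕ} (hβ : β = 1) (I : Ideal (MvPolynomial (Fin n) K))
    (v : Fin β → MvPolynomial (Fin n) K) (j : Fin β) :
    v ∈ LinearMap.ker (I.mkQ ∘ₗ
        (LinearMap.lsum (MvPolynomial (Fin n) K)
            (fun _ : Fin β => MvPolynomial (Fin n) K) ℕ) fun _ => LinearMap.id) ↔
      v j ∈ I := by
  subst hβ
  have : j = 0 := Subsingleton.elim _ _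
  subst this
  rw [LinearMap.mem_ker, LinearMap.comp_apply, Submodule.mkQ_apply,
    Submodule.Quotient.mk_eq_zero]
  simp [LinearMap.lsum_apply]

lemma mem_range_mat {p q : ℕ} (M : Fin q → Fin p → MvPolynomial (Fin n) K)
    (v : Fin p → MvPolynomial (Fin n) K) :
    v ∈ LinearMap.range (Matrix.mulVecLin (Matrix.of fun j' j => M j j')) ↔
      ∃ w : Fin q → MvPolynomial (Fin n) K, ∀ j', v j' = ∑ j, M j j' * w j := by
  constructor
  · rintro ⟨w, rfl⟩
    exact ⟨w, fun j' => by simp [Matrix.mulVec, dotProduct]⟩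
  · rintro ⟨w, hw⟩
    exact ⟨w, by ext1 j'; simp [Matrix.mulVec, dotProduct, hw]⟩

lemma mem_ker_mat {p q : ℕ} (M : Fin q → Fin p → MvPolynomial (Fin n) K)
    (v : Fin q → MvPolynomial (Fin n) K) :
    v ∈ LinearMap.ker (Matrix.mulVecLin (Matrix.of fun j' j => M j j')) ↔
      ∀ j', ∑ j, M j j' * v j = 0 := by
  rw [LinearMap.mem_ker, funext_iff]
  simp [Matrix.mulVec, dotProduct]

/-- The `BRes` with one generator for each basis element of each free module. -/
def MinFreeRes.toBRes (F : MinFreeRes K a) [Fintype (Σ i, Fin (F.β i))] :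
    BRes K a (Σ i, Fin (F.β i)) where
  h x := x.1
  s x := F.deg x.1 x.2
  D := F.totD
  o := ⟨0, ⟨0, by rw [F.β0]; exact one_pos⟩⟩
  h_eq_zero := by
    rintro ⟨i, j⟩
    constructor
    · intro h
      change i = 0 at h
      subst h
      have hs : Subsingleton (Fin (F.β 0)) := by rw [F.β0]; infer_instance
      exact congrArg _ (Subsingleton.elim _ _)
    · intro h
      exact congrArg Sigma.fst h
  s_o := F.deg0 _
  hD x y hxy := by
    by_contra h
    exact hxy (by rw [MinFreeRes.totD, dif_neg h])
  homog := by
    rintro ⟨i, j⟩ ⟨i', j'⟩ e he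
    by_cases h : i = i' + 1
    · subst h
      rw [F.totD_succ] at he
      exact F.homog _ _ _ e he
    · simp [MinFreeRes.totD, h] at he
  minimal := by
    rintro ⟨i, j⟩ ⟨i', j'⟩
    by_cases h : i = i' + 1
    · subst h
      rw [F.totD_succ]
      exact F.minimal _ _ _
    · simp [MinFreeRes.totD, h]
  exact v := by
    have key0 := F.exact_zero
    have key := F.exact_succ
    constructor
    · rintro ⟨h1, h2⟩
      have h3 : ∀ i, ∃ w : Fin (F.β (i + 1)) → MvPolynomial (Fin n) K,
          ∀ j', v ⟨i, j'⟩ = ∑ j, F.mat i j j' * w j := by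
        intro i
        rw [← mem_range_mat (F.mat i) (fun j' => v ⟨i, j'⟩)]
        rcases i with _ | i
        · rw [← key0]
          exact (mem_ker_aug F.β0 _ _ _).2 h2
        · rw [← key, mem_ker_mat]
          intro j'
          rw [← F.sum_totD]
          exact h1 _
      choose w hw using h3
      refine ⟨fun x => match x with
        | ⟨0, _⟩ => 0
        | ⟨i + 1, j⟩ => w i j, ?_⟩
      rintro ⟨i, j'⟩
      rw [F.sum_totD, hw]
    · rintro ⟨w, hw⟩
      constructor
      · rintro ⟨i, j'⟩
        rw [F.sum_totD, ← mem_ker_mat (F.mat i) (fun j => v ⟨i + 1, j⟩) |>.1]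
        rw [key, mem_range_mat]
        exact ⟨fun j => w ⟨i + 1 + 1, j⟩, fun j => by rw [hw, F.sum_totD]⟩
      · rw [← mem_ker_aug F.β0 _ (fun j => v ⟨0, j⟩), key0, mem_range_mat]
        exact ⟨fun j => w ⟨0 + 1, j⟩, fun j => by rw [hw, F.sum_totD]⟩

lemma MinFreeRes.toBRes_SI (F : MinFreeRes K a) [Fintype (Σ i, Fin (F.β i))]
    (hF : SIFRCond F) : F.toBRes.SI := by
  rintro ⟨i, j⟩ ⟨i', j'⟩ hne hh γ hγ
  change i = i' at hh
  subst hh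
  have hjj : j ≠ j' := fun h => hne (by rw [h])
  refine hF i ?_ (F.le_pd j) j j' hjj γ hγ
  rcases Nat.eq_zero_or_pos i with h0 | h0
  · subst h0
    have hs : Subsingleton (Fin (F.β 0)) := by rw [F.β0]; infer_instance
    exact absurd (Subsingleton.elim _ _) hjj
  · exact h0

namespace BRes

variable {J : Type} [Fintype J] (B : BRes K a J)

/-- An enumeration of the generators of homological degree `i`. -/
def enum (i : ℕ) : Fin (Nat.card {j // B.h j = i}) ≃ {j // B.h j = i} :=
  (Finite.equivFin _).symm

/-- The `k`-th generator of homological degree `i`. -/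
def gen (i : ℕ) (k : Fin (Nat.card {j // B.h j = i})) : J := (B.enum i k).1

lemma h_gen (i : ℕ) (k : Fin (Nat.card {j // B.h j = i})) : B.h (B.gen i k) = i :=
  (B.enum i k).2

lemma gen_injective (i : ℕ) : Function.Injective (B.gen i) :=
  Subtype.val_injective.comp (B.enum i).injective

lemma exists_gen {i : ℕ} {j : J} (hj : B.h j = i) : ∃ k, B.gen i k = j :=
  ⟨(B.enum i).symm ⟨j, hj⟩, by simp [gen]⟩

lemma sum_gen (i : ℕ) (j' : J) (hj' : B.h j' = i) (v : J → MvPolynomial (Fin n) K) :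
    ∑ k, B.D (B.gen (i + 1) k) j' * v (B.gen (i + 1) k) = ∑ j, B.D j j' * v j := by
  refine Fintype.sum_of_injective (B.gen (i + 1)) (B.gen_injective _) _ _ ?_ (fun _ => rfl)
  intro j hj
  by_contra h
  have h1 := B.hD j j' (left_ne_zero_of_mul h)
  rw [hj'] at h1
  exact hj (B.exists_gen h1)

lemma card_zero : Nat.card {j // B.h j = 0} = 1 := by
  rw [Nat.card_eq_one_iff_unique]
  refine ⟨⟨fun x y => Subtype.ext ?_⟩, ⟨B.o, (B.h_eq_zero _).2 rfl⟩⟩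
  rw [(B.h_eq_zero _).1 x.2, (B.h_eq_zero _).1 y.2]

lemma gen_zero (k) : B.gen 0 k = B.o := (B.h_eq_zero _).1 (B.h_gen 0 k)

/-- The differential only reaches degree `i` from degree `i + 1`, so the exactness of the total
module splits into exactness at each homological degree. -/
lemma exact_at (i : ℕ) (v : Fin (Nat.card {j // B.h j = i}) → MvPolynomial (Fin n) K) :
    ((∀ j', ∑ j, B.D j j' * Function.extend (B.gen i) v 0 j = 0) ∧
      Function.extend (B.gen i) v 0 B.o ∈ toricIdeal K a) ↔
    ∃ w : Fin (Nat.card {j // B.h j = i + 1}) → MvPolynomial (Fin n) K,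
      ∀ k', v k' = ∑ k, B.D (B.gen (i + 1) k) (B.gen i k') * w k := by
  rw [B.exact]
  constructor
  · rintro ⟨w, hw⟩
    refine ⟨fun k => w (B.gen (i + 1) k), fun k' => ?_⟩
    rw [B.sum_gen i _ (B.h_gen i k'), ← hw, (B.gen_injective i).extend_apply]
  · rintro ⟨w, hw⟩
    refine ⟨Function.extend (B.gen (i + 1)) w 0, fun j' => ?_⟩
    by_cases hj' : B.h j' = i
    · obtain ⟨k', rfl⟩ := B.exists_gen hj'
      rw [(B.gen_injective i).extend_apply, hw, ← B.sum_gen i _ hj']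
      simp [(B.gen_injective (i + 1)).extend_apply]
    · rw [Function.extend_apply' _ _ _ (by rintro ⟨k, rfl⟩; exact hj' (B.h_gen i k))]
      symm
      refine Finset.sum_eq_zero fun j _ => ?_
      by_cases hj : B.h j = i + 1
      · have : B.D j j' = 0 := by
          by_contra h
          have := B.hD _ _ h
          omega
        rw [this, zero_mul]
      · rw [Function.extend_apply' _ _ _ (by rintro ⟨k, rfl⟩; exact hj (B.h_gen _ k))]
        simp

/-- The `MinFreeRes` obtained by sorting the generators by homological degree. -/
def toMinFreeRes : MinFreeRes K a where
  β i := Nat.card {j // B.h j = i}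
  β0 := B.card_zero
  bdd := by
    refine ⟨(∑ j, B.h j) + 1, fun i hi => ?_⟩
    have : IsEmpty {j // B.h j = i} := by
      refine ⟨fun x => ?_⟩
      have h1 := Finset.single_le_sum (f := B.h) (fun _ _ => Nat.zero_le _)
        (Finset.mem_univ x.1)
      have h2 := x.2
      omega
    exact Nat.card_of_isEmpty
  deg i k := B.s (B.gen i k)
  deg0 k := by rw [B.gen_zero, B.s_o]
  mat i k k' := B.D (B.gen (i + 1) k) (B.gen i k')
  homog i k k' := B.homog _ _
  minimal i k k' := B.minimal _ _
  exact_zero := by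
    ext1 v
    let k0 : Fin (Nat.card {j // B.h j = 0}) := ⟨0, by rw [B.card_zero]; exact one_pos⟩
    rw [mem_ker_aug B.card_zero _ _ k0,
      mem_range_mat fun k k' => B.D (B.gen (0 + 1) k) (B.gen 0 k'), ← B.exact_at 0 v]
    have h1 : Function.extend (B.gen 0) v 0 B.o = v k0 := by
      rw [← B.gen_zero k0, (B.gen_injective 0).extend_apply]
    rw [h1]
    refine ⟨fun h => ⟨fun j' => Finset.sum_eq_zero fun j _ => ?_, h⟩, fun h => h.2⟩
    by_cases hj : B.h j = 0
    · have : B.D j j' = 0 := by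
        by_contra h
        have := B.hD _ _ h
        omega
      rw [this, zero_mul]
    · rw [Function.extend_apply' _ _ _ (by rintro ⟨k, rfl⟩; exact hj (B.h_gen _ k))]
      simp
  exact_succ i := by
    ext1 v
    rw [mem_range_mat fun k k' => B.D (B.gen (i + 1 + 1) k) (B.gen (i + 1) k'),
      ← B.exact_at (i + 1) v, mem_ker_mat fun k k' => B.D (B.gen (i + 1) k) (B.gen i k')]
    have h0 : Function.extend (B.gen (i + 1)) v 0 B.o = 0 := by
      rw [Function.extend_apply']
      · rfl
      · rintro ⟨k, hk⟩
        have := B.h_gen (i + 1) k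
        rw [hk, (B.h_eq_zero _).2 rfl] at this
        omega
    rw [h0]
    simp only [zero_mem, and_true]
    have h2 : ∀ j', B.h j' = i → ∑ j, B.D j j' * Function.extend (B.gen (i + 1)) v 0 j =
        ∑ k, B.D (B.gen (i + 1) k) j' * v k := by
      intro j' hj'
      rw [← B.sum_gen i j' hj']
      simp [(B.gen_injective (i + 1)).extend_apply]
    constructor
    · intro h j'
      by_cases hj' : B.h j' = i
      · obtain ⟨k', rfl⟩ := B.exists_gen hj'
        rw [h2 _ hj', h]
      · refine Finset.sum_eq_zero fun j _ => ?_
        by_cases hj : B.h j = i + 1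
        · have : B.D j j' = 0 := by
            by_contra h
            have := B.hD _ _ h
            omega
          rw [this, zero_mul]
        · rw [Function.extend_apply' _ _ _ (by rintro ⟨k, rfl⟩; exact hj (B.h_gen _ k))]
          simp
    · intro h k'
      rw [← h2 _ (B.h_gen i k'), h]

lemma toMinFreeRes_SIFRCond (hB : B.SI) : SIFRCond B.toMinFreeRes := by
  intro i _ _ k k' hne γ hγ
  refine hB _ _ (fun h => hne (B.gen_injective i h)) ?_ γ hγ
  exact (B.h_gen i k).trans (B.h_gen i k').symm

end BRes

lemma hasSIFR_of_BRes {J : Type} [Fintype J] (B : BRes K a J) (hB : B.SI) : HasSIFR K a :=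
  ⟨B.toMinFreeRes, B.toMinFreeRes_SIFRCond hB⟩

lemma HasSIFR.exists_BRes (h : HasSIFR K a) :
    ∃ (J : Type) (_ : Fintype J) (B : BRes K a J), B.SI := by
  obtain ⟨F, hF⟩ := h
  have := F.finite_gens
  let _ := Fintype.ofFinite (Σ i, Fin (F.β i))
  exact ⟨_, inferInstance, F.toBRes, F.toBRes_SI hF⟩

end Convert

/-! ### Degrees of the generators of a minimal resolution -/

namespace BRes

variable {K : Type*} [Field K] {n d : ℕ} {a : Fin n → Fin d → ℕ}
  {J : Type} [Fintype J] (B : BRes K a J)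

lemma D_o (j : J) : B.D B.o j = 0 := by
  by_contra h
  have h1 := B.hD _ _ h
  rw [(B.h_eq_zero _).2 rfl] at h1
  omega

lemma D_mem (j : J) : B.D j B.o ∈ toricIdeal K a := by
  classical
  refine ((B.exact fun j' => B.D j j').2 ⟨Pi.single j 1, fun j' => ?_⟩).2
  simp [Pi.single_apply]

/-- In a minimal resolution every generator of positive degree has nonzero differential:
otherwise it would be a cycle, hence a boundary, against minimality. -/
lemma exists_D_ne_zero (j : J) (hj : B.h j ≠ 0) : ∃ j', B.D j j' ≠ 0 := by
  classical
  by_contra! hz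
  have hjo : B.o ≠ j := fun h => hj ((B.h_eq_zero j).2 h.symm)
  obtain ⟨w, hw⟩ := (B.exact (Pi.single j 1)).1
    ⟨fun j' => by simp [Pi.single_apply, hz], by simp [hjo]⟩
  have h1 := congrArg (coeff 0) (hw j)
  have h2 : ∀ x, coeff 0 (B.D x j * w x) = 0 := fun x => by
    rw [← constantCoeff_eq, map_mul, constantCoeff_eq, B.minimal, zero_mul]
  rw [coeff_sum, Finset.sum_eq_zero fun x _ => h2 x, Pi.single_eq_same, coeff_zero_one] at h1
  exact one_ne_zero h1

/-- One step down the resolution strictly decreases the degree by a nonzero element of `Γ`. -/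
lemma exists_step (ha : ∀ i, a i ≠ 0) (j : J) (hj : B.h j ≠ 0) :
    ∃ j', B.h j = B.h j' + 1 ∧ ∃ γ ∈ affSemigroup a, γ ≠ 0 ∧ B.s j = γ + B.s j' := by
  obtain ⟨j', hj'⟩ := B.exists_D_ne_zero j hj
  refine ⟨j', B.hD _ _ hj', ?_⟩
  obtain ⟨e, he⟩ := support_nonempty.2 hj'
  refine ⟨gammaDeg a e, gammaDeg_mem a e, fun h0 => ?_, B.homog _ _ e he⟩
  rw [gammaDeg_eq_zero ha h0] at he
  exact (mem_support_iff.1 he) (B.minimal _ _)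

lemma exists_descent (ha : ∀ i, a i ≠ 0) (j : J) (q : ℕ) (hq : q < B.h j) :
    ∃ j', B.h j' = q ∧ ∃ γ ∈ affSemigroup a, γ ≠ 0 ∧ B.s j = γ + B.s j' := by
  induction hk : B.h j generalizing j with
  | zero => omega
  | succ k ih =>
    obtain ⟨j₁, h1, γ, hγ, hγ0, hs⟩ := B.exists_step ha j (by omega)
    rcases Nat.lt_or_ge q (B.h j₁) with h | h
    · obtain ⟨j₂, h2, δ, hδ, hδ0, hs'⟩ := ih j₁ h (by omega)
      refine ⟨j₂, h2, γ + δ, add_mem hγ hδ, ?_, by rw [hs, hs', add_assoc]⟩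
      intro h0
      exact hγ0 (add_eq_zero.1 h0).1
    · exact ⟨j₁, by omega, γ, hγ, hγ0, hs⟩

lemma s_mem (ha : ∀ i, a i ≠ 0) (j : J) : B.s j ∈ affSemigroup a := by
  rcases Nat.eq_zero_or_pos (B.h j) with h | h
  · rw [(B.h_eq_zero j).1 h, B.s_o]
    exact zero_mem _
  · obtain ⟨j', h', γ, hγ, -, hs⟩ := B.exists_descent ha j 0 h
    rw [hs, (B.h_eq_zero j').1 h', B.s_o, add_zero]
    exact hγ

end BRes

/-! ### Restriction of a resolution to a face -/

section Face

variable {K : Type*} [Field K] {m n d : ℕ} {a : Fin n → Fin d → ℕ} {f : Fin m → Fin n}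

/-- The subsemigroup generated by the `a (f i)` is a face: a monomial whose degree lies in it only
involves the variables in the range of `f`. -/
def IsFace (a : Fin n → Fin d → ℕ) (f : Fin m → Fin n) : Prop :=
  ∀ e : Fin n →₀ ℕ, gammaDeg a e ∈ affSemigroup (a ∘ f) → (e.support : Set (Fin n)) ⊆ Set.range f

lemma affSemigroup_comp_le : affSemigroup (a ∘ f) ≤ affSemigroup a :=
  AddSubmonoid.closure_mono (Set.range_comp_subset_range f a)

lemma gammaDeg_mem_of_subset (hf : Function.Injective f) {e : Fin n →₀ ℕ}
    (he : (e.support : Set (Fin n)) ⊆ Set.range f) :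
    gammaDeg a e ∈ affSemigroup (a ∘ f) := by
  rw [← Finsupp.mapDomain_comapDomain f hf e he, gammaDeg_mapDomain]
  exact gammaDeg_mem _ _

lemma IsFace.left_mem (hface : IsFace a f) (hf : Function.Injective f) {u v : Fin d → ℕ}
    (hu : u ∈ affSemigroup a) (hv : v ∈ affSemigroup a) (huv : u + v ∈ affSemigroup (a ∘ f)) :
    u ∈ affSemigroup (a ∘ f) := by
  obtain ⟨e, rfl⟩ := exists_gammaDeg hu
  obtain ⟨e', rfl⟩ := exists_gammaDeg hv
  rw [← gammaDeg_add] at huv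
  refine gammaDeg_mem_of_subset hf (subset_trans ?_ (hface _ huv))
  intro i hi
  simp only [Finset.mem_coe, Finsupp.mem_support_iff, Finsupp.add_apply] at hi ⊢
  omega

lemma rename_killCompl_of_subset (hf : Function.Injective f) (p : MvPolynomial (Fin n) K)
    (hp : ∀ e ∈ p.support, (e.support : Set (Fin n)) ⊆ Set.range f) :
    rename f (killCompl hf p) = p := by
  ext e
  by_cases he : (e.support : Set (Fin n)) ⊆ Set.range f
  · rw [← Finsupp.mapDomain_comapDomain f hf e he, coeff_rename_mapDomain f hf, coeff_killCompl]
  · have h1 : coeff e p = 0 := by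
      by_contra h
      exact he (hp e (mem_support_iff.2 h))
    rw [h1]
    by_contra h
    have := support_rename_killCompl_subset hf (mem_support_iff.2 h)
    exact mem_support_iff.1 this h1

lemma killCompl_eq_zero_of_not_subset (hf : Function.Injective f) (p : MvPolynomial (Fin n) K)
    (hp : ∀ e ∈ p.support, ¬ (e.support : Set (Fin n)) ⊆ Set.range f) :
    killCompl hf p = 0 := by
  ext e
  rw [coeff_killCompl, coeff_zero]
  by_contra h
  refine hp _ (mem_support_iff.2 h) ?_
  intro i hi
  obtain ⟨k, -, rfl⟩ := Finset.mem_image.1 (Finsupp.mapDomain_support hi)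
  exact ⟨k, rfl⟩

namespace BRes

variable {J : Type} [Fintype J] (B : BRes K a J)

/-- The differential of a generator whose degree is in the face stays in the face. -/
lemma D_eq_zero_of_face (ha : ∀ i, a i ≠ 0) (hf : Function.Injective f) (hface : IsFace a f)
    {j j' : J} (hj : B.s j ∈ affSemigroup (a ∘ f)) (hj' : B.s j' ∉ affSemigroup (a ∘ f)) :
    B.D j j' = 0 := by
  by_contra h
  obtain ⟨e, he⟩ := support_nonempty.2 h
  have h1 := B.homog _ _ e he
  rw [h1, add_comm] at hj
  exact hj' (hface.left_mem hf (B.s_mem ha j') (gammaDeg_mem a e) hj)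

lemma rename_killCompl_D (ha : ∀ i, a i ≠ 0) (hf : Function.Injective f) (hface : IsFace a f)
    {j j' : J} (hj : B.s j ∈ affSemigroup (a ∘ f)) :
    rename f (killCompl hf (B.D j j')) = B.D j j' := by
  refine rename_killCompl_of_subset hf _ fun e he => hface e ?_
  rw [B.homog _ _ e he] at hj
  exact hface.left_mem hf (gammaDeg_mem a e) (B.s_mem ha j') hj

lemma killCompl_D_eq_zero (hf : Function.Injective f) {j j' : J}
    (hj : B.s j ∉ affSemigroup (a ∘ f)) (hj' : B.s j' ∈ affSemigroup (a ∘ f)) :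
    killCompl hf (B.D j j') = 0 := by
  refine killCompl_eq_zero_of_not_subset hf _ fun e he hsub => hj ?_
  rw [B.homog _ _ e he]
  exact add_mem (gammaDeg_mem_of_subset hf hsub) hj'

/-- The generators whose degree lies in the face `⟨a (f i)⟩`. -/
abbrev FaceGen (B : BRes K a J) (f : Fin m → Fin n) : Type :=
  {j : J // B.s j ∈ affSemigroup (a ∘ f)}

open Classical in
/-- Extension of a vector by zero from the generators in the face to all generators, along the
inclusion `rename f` of polynomial rings. -/
def faceExt (f : Fin m → Fin n) (u : B.FaceGen f → MvPolynomial (Fin m) K) (j : J) :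
    MvPolynomial (Fin n) K :=
  if h : B.s j ∈ affSemigroup (a ∘ f) then rename f (u ⟨j, h⟩) else 0

lemma faceExt_val (u : B.FaceGen f → MvPolynomial (Fin m) K) (j : B.FaceGen f) :
    B.faceExt f u j.1 = rename f (u j) := dif_pos j.2

lemma faceExt_of_notMem (u : B.FaceGen f → MvPolynomial (Fin m) K) {j : J}
    (h : B.s j ∉ affSemigroup (a ∘ f)) : B.faceExt f u j = 0 := dif_neg h

lemma faceExt_zero (j : J) : B.faceExt f 0 j = 0 := by
  by_cases h : B.s j ∈ affSemigroup (a ∘ f)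
  · exact (B.faceExt_val 0 ⟨j, h⟩).trans (by simp)
  · exact B.faceExt_of_notMem 0 h

variable [Fintype (B.FaceGen f)]

/-- The differential restricted to the generators in the face. -/
def faceD (hf : Function.Injective f) (u : B.FaceGen f → MvPolynomial (Fin m) K)
    (j' : B.FaceGen f) : MvPolynomial (Fin m) K :=
  ∑ j : B.FaceGen f, killCompl hf (B.D j.1 j'.1) * u j

lemma sum_D_faceExt (ha : ∀ i, a i ≠ 0) (hf : Function.Injective f) (hface : IsFace a f)
    (u : B.FaceGen f → MvPolynomial (Fin m) K) (j' : J) :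
    ∑ j, B.D j j' * B.faceExt f u j = B.faceExt f (B.faceD hf u) j' := by
  have h1 : ∑ j, B.D j j' * B.faceExt f u j =
      ∑ j : B.FaceGen f, B.D j.1 j' * rename f (u j) := by
    symm
    refine Fintype.sum_of_injective Subtype.val Subtype.val_injective _ _ ?_ ?_
    · intro j hj
      rw [B.faceExt_of_notMem u fun h => hj ⟨⟨j, h⟩, rfl⟩, mul_zero]
    · intro j
      rw [B.faceExt_val]
  rw [h1]
  by_cases hj' : B.s j' ∈ affSemigroup (a ∘ f)
  · rw [B.faceExt_val _ ⟨j', hj'⟩, faceD, map_sum]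
    refine Finset.sum_congr rfl fun j _ => ?_
    rw [map_mul, B.rename_killCompl_D ha hf hface j.2]
  · rw [B.faceExt_of_notMem _ hj']
    refine Finset.sum_eq_zero fun j _ => ?_
    rw [B.D_eq_zero_of_face ha hf hface j.2 hj', zero_mul]

lemma killCompl_sum_D (hf : Function.Injective f) (w : J → MvPolynomial (Fin n) K)
    (j' : B.FaceGen f) :
    killCompl hf (∑ j, B.D j j'.1 * w j) = B.faceD hf (fun j => killCompl hf (w j.1)) j' := by
  rw [map_sum]
  symm
  refine Fintype.sum_of_injective Subtype.val Subtype.val_injective _ _ ?_ ?_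
  · intro j hj
    rw [map_mul, B.killCompl_D_eq_zero hf (fun h => hj ⟨⟨j, h⟩, rfl⟩) j'.2, zero_mul]
  · intro j
    rw [map_mul]

/-- The generators whose degree lies in a face of `Γ` form a minimal resolution of the semigroup
ring of that face. It is a retract of the given one: `faceExt` includes it, and restricting to
the chosen generators and setting the variables outside the face to zero projects onto it. -/
def restrict (ha : ∀ i, a i ≠ 0) (hf : Function.Injective f) (hface : IsFace a f) :
    BRes K (a ∘ f) (B.FaceGen f) where
  h j := B.h j.1
  s j := B.s j.1
  D j j' := killCompl hf (B.D j.1 j'.1)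
  o := ⟨B.o, by rw [B.s_o]; exact zero_mem _⟩
  h_eq_zero j := by rw [B.h_eq_zero, Subtype.ext_iff]
  s_o := B.s_o
  hD j j' h := B.hD _ _ fun h0 => h (by rw [h0, map_zero])
  homog j j' e he := by
    rw [mem_support_iff, coeff_killCompl, ← mem_support_iff] at he
    rw [B.homog _ _ _ he, gammaDeg_mapDomain]
  minimal j j' := by
    rw [coeff_killCompl, Finsupp.mapDomain_zero, B.minimal]
  exact v := by
    have hT : v ⟨B.o, by rw [B.s_o]; exact zero_mem _⟩ ∈ toricIdeal K (a ∘ f) ↔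
        B.faceExt f v B.o ∈ toricIdeal K a := by
      rw [B.faceExt_val v ⟨B.o, by rw [B.s_o]; exact zero_mem _⟩, mem_toricIdeal,
        mem_toricIdeal, toricMap_rename]
    rw [hT]
    constructor
    · rintro ⟨h1, h2⟩
      have h0 : B.faceD hf v = 0 := funext h1
      obtain ⟨w, hw⟩ := (B.exact (B.faceExt f v)).1 ⟨fun j' => by
        rw [B.sum_D_faceExt ha hf hface, h0, B.faceExt_zero], h2⟩
      refine ⟨fun j => killCompl hf (w j.1), fun j' => ?_⟩
      have h3 := congrArg (killCompl hf) (hw j'.1)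
      rw [B.faceExt_val, killCompl_rename_app, B.killCompl_sum_D] at h3
      exact h3
    · rintro ⟨w, hw⟩
      have hv : v = B.faceD hf w := funext hw
      have h1 := (B.exact (B.faceExt f v)).2 ⟨B.faceExt f w, fun j' => by
        rw [B.sum_D_faceExt ha hf hface, hv]⟩
      refine ⟨fun j' => ?_, h1.2⟩
      have h2 := h1.1 j'.1
      rw [B.sum_D_faceExt ha hf hface, B.faceExt_val] at h2
      exact rename_injective f hf (by rw [map_zero]; exact h2)

end BRes

lemma HasSIFR.restrict (ha : ∀ i, a i ≠ 0) (hf : Function.Injective f) (hface : IsFace a f)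
    (h : HasSIFR K a) : HasSIFR K (a ∘ f) := by
  classical
  obtain ⟨J, _, B, hB⟩ := h.exists_BRes
  refine hasSIFR_of_BRes (B.restrict ha hf hface) ?_
  intro j j' hne hh γ hγ
  exact hB j.1 j'.1 (fun h => hne (Subtype.ext h)) hh γ (affSemigroup_comp_le hγ)

end Face

/-! ### Contracting homotopies over the ground field -/

section Homotopy

variable {K : Type*} [Field K]

/-- An exact differential module over a field has a contracting homotopy, up to the projector
`σ` onto a complement of the boundaries in the cycles. If the differential is odd for a parity idempotent `e`,
the homotopy can be chosen odd, i.e. anticommuting with the sign operator `2e - 1`. -/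
lemma exists_odd_homotopy {V : Type*} [AddCommGroup V] [Module K V] (d σ e : Module.End K V)
    (hdd : d * d = 0) (hdσ : d * σ = 0) (hσd : σ * d = 0) (hσσ : σ * σ = σ)
    (hex : ∀ v, d v = 0 → σ v = 0 → ∃ w, d w = v)
    (hee : e * e = e) (hde : d * e = (1 - e) * d) (heσ : e * σ = σ) (hσe : σ * e = σ) :
    ∃ h : Module.End K V, d * h + h * d = 1 - σ ∧ (e + e - 1) * h + h * (e + e - 1) = 0 := by
  obtain ⟨s, hs⟩ := LinearMap.exists_rightInverse_of_surjective d.rangeRestrict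
    (LinearMap.range_rangeRestrict d)
  have hs' : ∀ (v) (hv : v ∈ LinearMap.range d), d (s ⟨v, hv⟩) = v := fun v hv =>
    congrArg Subtype.val (LinearMap.congr_fun hs ⟨v, hv⟩)
  -- `s₁` is a section of `d` on boundaries with values in the kernel of `σ`
  let s₁ : LinearMap.range d →ₗ[K] V := (1 - σ) ∘ₗ s
  have e1 : ∀ v, d (d v) = 0 := fun v => LinearMap.congr_fun hdd v
  have e2 : ∀ v, d (σ v) = 0 := fun v => LinearMap.congr_fun hdσ v
  have e3 : ∀ v, σ (d v) = 0 := fun v => LinearMap.congr_fun hσd v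
  have e4 : ∀ v, σ (σ v) = σ v := fun v => LinearMap.congr_fun hσσ v
  have hs₁ : ∀ (v) (hv : v ∈ LinearMap.range d), d (s₁ ⟨v, hv⟩) = v := fun v hv => by
    simp [s₁, e2, hs']
  have hs₁σ : ∀ x, σ (s₁ x) = 0 := fun x => by simp [s₁, e4]
  let q : Module.End K V := 1 - σ - s₁ ∘ₗ d.rangeRestrict
  have hq : ∀ v, q v = v - σ v - s₁ ⟨d v, LinearMap.mem_range_self d v⟩ := fun v => rfl
  have hqr : ∀ v, q v ∈ LinearMap.range d := by
    intro v
    obtain ⟨w, hw⟩ := hex (q v) (by rw [hq]; simp [e2, hs₁]) (by rw [hq]; simp [e4, hs₁σ])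
    exact ⟨w, hw⟩
  let h : Module.End K V := s₁ ∘ₗ (q.codRestrict _ hqr)
  have hh : ∀ v, h v = s₁ ⟨q v, hqr v⟩ := fun v => rfl
  have main : d * h + h * d = 1 - σ := by
    ext1 v
    have hqd : (⟨q (d v), hqr (d v)⟩ : LinearMap.range d) =
        ⟨d v, LinearMap.mem_range_self d v⟩ := by
      have h0 : (⟨d (d v), LinearMap.mem_range_self d (d v)⟩ : LinearMap.range d) = 0 :=
        Subtype.ext (e1 v)
      refine Subtype.ext ?_
      change q (d v) = d v
      rw [hq, h0, map_zero, e3]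
      simp
    change d (h v) + h (d v) = v - σ v
    rw [hh, hh, hs₁, hqd, hq]
    abel
  refine ⟨e * h * (1 - e) + (1 - e) * h * e, ?_, ?_⟩
  · -- even and odd parts of `main`, using that `d` exchanges them
    have hde' : d * (1 - e) = e * d := by rw [mul_sub, hde]; noncomm_ring
    have hed : (1 - e) * d = d * e := hde.symm
    have hed' : e * d = d * (1 - e) := hde'.symm
    have h1e : (1 - e) * (1 - e) = 1 - e := by
      rw [mul_sub, sub_mul 1 e e, hee]; noncomm_ring
    calc d * (e * h * (1 - e) + (1 - e) * h * e) + (e * h * (1 - e) + (1 - e) * h * e) * d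
        = (d * e) * h * (1 - e) + (d * (1 - e)) * h * e
          + (e * h * ((1 - e) * d) + (1 - e) * h * (e * d)) := by noncomm_ring
      _ = ((1 - e) * d) * h * (1 - e) + (e * d) * h * e
          + (e * h * (d * e) + (1 - e) * h * (d * (1 - e))) := by rw [hde, hde']
      _ = (1 - e) * (d * h + h * d) * (1 - e) + e * (d * h + h * d) * e := by noncomm_ring
      _ = (1 - e) * (1 - e) - (σ - e * σ) * (1 - e) + (e * e - e * σ * e) := by
          rw [main]; noncomm_ring
      _ = 1 - σ := by rw [h1e, hee, heσ, hσe]; noncomm_ring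
  · have k1 : e * (1 - e) = 0 := by rw [mul_sub, hee]; noncomm_ring
    have k2 : (1 - e) * e = 0 := by rw [sub_mul, hee]; noncomm_ring
    have k3 : (1 - e) * (1 - e) = 1 - e := by rw [mul_sub, k2]; noncomm_ring
    have k4 : e + e - 1 = e - (1 - e) := by abel
    rw [k4]
    calc (e - (1 - e)) * (e * h * (1 - e) + (1 - e) * h * e)
          + (e * h * (1 - e) + (1 - e) * h * e) * (e - (1 - e))
        = (e * e) * h * (1 - e) + (e * (1 - e)) * h * e - ((1 - e) * e) * h * (1 - e)
          - ((1 - e) * (1 - e)) * h * e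
          + (e * h * ((1 - e) * e) + (1 - e) * h * (e * e) - e * h * ((1 - e) * (1 - e))
          - (1 - e) * h * (e * (1 - e))) := by noncomm_ring
      _ = 0 := by rw [k1, k2, k3, hee]; noncomm_ring

/-- The Künneth homotopy on a tensor product of two differential modules: the differential is
`d₁ ⊗ 1 + τ ⊗ d₂` with `τ` the sign operator. -/
lemma tensor_homotopy {V W : Type*} [AddCommGroup V] [Module K V] [AddCommGroup W] [Module K W]
    (d₁ σ₁ τ h₁ : Module.End K V) (d₂ σ₂ h₂ : Module.End K W)
    (H₁ : d₁ * h₁ + h₁ * d₁ = 1 - σ₁) (H₂ : d₂ * h₂ + h₂ * d₂ = 1 - σ₂)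
    (hτh : τ * h₁ + h₁ * τ = 0) (hτσ : τ * σ₁ = σ₁) (hστ : σ₁ * τ = σ₁)
    (hdσ : d₁ * σ₁ = 0) (hσd : σ₁ * d₁ = 0) :
    (TensorProduct.map d₁ 1 + TensorProduct.map τ d₂) *
        (TensorProduct.map h₁ 1 + TensorProduct.map σ₁ h₂) +
      (TensorProduct.map h₁ 1 + TensorProduct.map σ₁ h₂) *
        (TensorProduct.map d₁ 1 + TensorProduct.map τ d₂) =
      1 - (TensorProduct.map σ₁ σ₂ : Module.End K (TensorProduct K V W)) := by
  simp only [mul_add, add_mul, ← TensorProduct.map_mul, hdσ, hσd, hτσ, hστ, one_mul, mul_one,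
    TensorProduct.map_zero_left]
  have a1 : TensorProduct.map (d₁ * h₁) (1 : Module.End K W) +
      TensorProduct.map (h₁ * d₁) (1 : Module.End K W) = 1 - TensorProduct.map σ₁ 1 := by
    rw [eq_sub_iff_add_eq, ← TensorProduct.map_add_left, ← TensorProduct.map_add_left, H₁,
      sub_add_cancel, TensorProduct.map_one]
  have a2 : TensorProduct.map σ₁ (d₂ * h₂) + TensorProduct.map σ₁ (h₂ * d₂) =
      TensorProduct.map σ₁ 1 - TensorProduct.map σ₁ σ₂ := by
    rw [eq_sub_iff_add_eq, ← TensorProduct.map_add_right, ← TensorProduct.map_add_right, H₂,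
      sub_add_cancel]
  have a3 : TensorProduct.map (τ * h₁) d₂ + TensorProduct.map (h₁ * τ) d₂ = 0 := by
    rw [← TensorProduct.map_add_left, hτh, TensorProduct.map_zero_left]
  have a4 : (1 : Module.End K (TensorProduct K V W)) - TensorProduct.map σ₁ σ₂ =
      (1 - TensorProduct.map σ₁ 1) + (TensorProduct.map σ₁ 1 - TensorProduct.map σ₁ σ₂) +
        (TensorProduct.map (τ * h₁) d₂ + TensorProduct.map (h₁ * τ) d₂) := by
    rw [a3]; abel
  rw [a4, ← a1, ← a2]
  abel

end Homotopy

section NormalForm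

variable {K : Type*} [Field K] {n d : ℕ}

/-- The `K`-linear normal form modulo the toric ideal: each monomial is replaced by a chosen
monomial of the same `Γ`-degree. -/
def sig (K : Type*) [Field K] (a : Fin n → Fin d → ℕ) :
    MvPolynomial (Fin n) K →ₗ[K] MvPolynomial (Fin n) K :=
  ((basisMonomials (Fin d) K).constr K
    fun u => monomial (Function.invFun (gammaDeg a) (u : Fin d → ℕ)) (1 : K)) ∘ₗ
      (toricMap K a).toLinearMap

lemma constr_monomial {V : Type*} [AddCommGroup V] [Module K V] (F : (Fin d →₀ ℕ) → V)
    (u : Fin d →₀ ℕ) : (basisMonomials (Fin d) K).constr K F (monomial u 1) = F u := by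
  have := (basisMonomials (Fin d) K).constr_basis K F u
  rwa [coe_basisMonomials] at this

lemma sig_monomial (a : Fin n → Fin d → ℕ) (e : Fin n →₀ ℕ) :
    sig K a (monomial e 1) =
      monomial (Function.invFun (gammaDeg a) (gammaDeg a e)) (1 : K) := by
  rw [sig, LinearMap.comp_apply, AlgHom.toLinearMap_apply, toricMap_monomial, constr_monomial]
  rfl

lemma sig_eq_zero {a : Fin n → Fin d → ℕ} {p : MvPolynomial (Fin n) K}
    (hp : p ∈ toricIdeal K a) : sig K a p = 0 := by
  rw [sig, LinearMap.comp_apply, AlgHom.toLinearMap_apply, mem_toricIdeal.1 hp, map_zero]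

lemma toricMap_sig (a : Fin n → Fin d → ℕ) (p : MvPolynomial (Fin n) K) :
    toricMap K a (sig K a p) = toricMap K a p := by
  have : (toricMap K a).toLinearMap ∘ₗ sig K a = (toricMap K a).toLinearMap := by
    refine (basisMonomials (Fin n) K).ext fun e => ?_
    rw [coe_basisMonomials]
    simp only [LinearMap.comp_apply, AlgHom.toLinearMap_apply]
    rw [sig_monomial, toricMap_monomial, toricMap_monomial,
      Function.invFun_eq (f := gammaDeg a) ⟨e, rfl⟩]
  exact LinearMap.congr_fun this p

lemma mem_toricIdeal_iff_sig {a : Fin n → Fin d → ℕ} {p : MvPolynomial (Fin n) K} :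
    p ∈ toricIdeal K a ↔ sig K a p = 0 := by
  refine ⟨sig_eq_zero, fun h => ?_⟩
  rw [mem_toricIdeal, ← toricMap_sig, h, map_zero]

lemma sig_sig (a : Fin n → Fin d → ℕ) (p : MvPolynomial (Fin n) K) :
    sig K a (sig K a p) = sig K a p := by
  have : sig K a (sig K a p - p) = 0 := by
    rw [← mem_toricIdeal_iff_sig, mem_toricIdeal, map_sub, toricMap_sig, sub_self]
  rwa [map_sub, sub_eq_zero] at this

end NormalForm

namespace BRes

variable {K : Type*} [Field K] {n d : ℕ} {a : Fin n → Fin d → ℕ}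
  {J : Type} [Fintype J] (B : BRes K a J)

/-- The differential as a `K`-linear endomorphism of the total module. -/
def dEnd : Module.End K (J → MvPolynomial (Fin n) K) where
  toFun v j' := ∑ j, B.D j j' * v j
  map_add' u v := by
    ext1 j'
    simp [mul_add, Finset.sum_add_distrib]
  map_smul' c v := by
    ext1 j'
    simp [Finset.smul_sum]

lemma dEnd_apply (v : J → MvPolynomial (Fin n) K) (j' : J) :
    B.dEnd v j' = ∑ j, B.D j j' * v j := rfl

/-- The projection onto the generators of even homological degree. -/
def evenEnd : Module.End K (J → MvPolynomial (Fin n) K) where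
  toFun v j := if Even (B.h j) then v j else 0
  map_add' u v := by
    ext1 j
    by_cases h : Even (B.h j) <;> simp [h]
  map_smul' c v := by
    ext1 j
    by_cases h : Even (B.h j) <;> simp [h]

lemma evenEnd_apply (v : J → MvPolynomial (Fin n) K) (j : J) :
    B.evenEnd v j = if Even (B.h j) then v j else 0 := rfl

open Classical in
/-- The normal form `sig` on the `o`-component, zero on the other components. -/
def sigEnd : Module.End K (J → MvPolynomial (Fin n) K) :=
  LinearMap.single K (fun _ : J => MvPolynomial (Fin n) K) B.o ∘ₗ sig K a ∘ₗ LinearMap.proj B.o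

lemma sigEnd_o (v : J → MvPolynomial (Fin n) K) : B.sigEnd v B.o = sig K a (v B.o) := by
  simp [sigEnd]

lemma sigEnd_of_ne (v : J → MvPolynomial (Fin n) K) {j : J} (hj : j ≠ B.o) :
    B.sigEnd v j = 0 := by
  simp [sigEnd, hj]

lemma even_o : Even (B.h B.o) := by
  rw [(B.h_eq_zero _).2 rfl]
  exact Even.zero

lemma dEnd_eq_zero_and_iff (v : J → MvPolynomial (Fin n) K) :
    (B.dEnd v = 0 ∧ v B.o ∈ toricIdeal K a) ↔ ∃ w, B.dEnd w = v := by
  have := B.exact v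
  rw [funext_iff]
  refine Iff.trans this ?_
  refine exists_congr fun w => ?_
  rw [funext_iff]
  exact forall_congr' fun j => eq_comm

lemma dEnd_sq : B.dEnd * B.dEnd = 0 := by
  ext1 v
  exact ((B.dEnd_eq_zero_and_iff _).2 ⟨v, rfl⟩).1

lemma dEnd_sigEnd : B.dEnd * B.sigEnd = 0 := by
  ext1 v
  funext j'
  refine Finset.sum_eq_zero fun j _ => ?_
  by_cases hj : j = B.o
  · rw [hj, B.D_o, zero_mul]
  · rw [B.sigEnd_of_ne _ hj, mul_zero]

lemma sigEnd_dEnd : B.sigEnd * B.dEnd = 0 := by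
  ext1 v
  funext j'
  change B.sigEnd (B.dEnd v) j' = 0
  by_cases hj : j' = B.o
  · rw [hj, B.sigEnd_o]
    exact sig_eq_zero ((B.dEnd_eq_zero_and_iff _).2 ⟨v, rfl⟩).2
  · rw [B.sigEnd_of_ne _ hj]

lemma sigEnd_sq : B.sigEnd * B.sigEnd = B.sigEnd := by
  ext1 v
  funext j
  change B.sigEnd (B.sigEnd v) j = _
  by_cases hj : j = B.o
  · rw [hj, B.sigEnd_o, B.sigEnd_o, sig_sig]
  · rw [B.sigEnd_of_ne _ hj, B.sigEnd_of_ne _ hj]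

lemma evenEnd_sigEnd : B.evenEnd * B.sigEnd = B.sigEnd := by
  ext1 v
  funext j
  change B.evenEnd (B.sigEnd v) j = _
  by_cases hj : j = B.o
  · rw [hj, B.evenEnd_apply, if_pos B.even_o]
  · rw [B.evenEnd_apply, B.sigEnd_of_ne _ hj, ite_self]

lemma sigEnd_evenEnd : B.sigEnd * B.evenEnd = B.sigEnd := by
  ext1 v
  funext j
  change B.sigEnd (B.evenEnd v) j = _
  by_cases hj : j = B.o
  · rw [hj, B.sigEnd_o, B.sigEnd_o, B.evenEnd_apply, if_pos B.even_o]
  · rw [B.sigEnd_of_ne _ hj, B.sigEnd_of_ne _ hj]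

lemma evenEnd_sq : B.evenEnd * B.evenEnd = B.evenEnd := by
  ext1 v
  funext j
  change B.evenEnd (B.evenEnd v) j = _
  by_cases h : Even (B.h j) <;> simp [B.evenEnd_apply, h]

lemma dEnd_evenEnd : B.dEnd * B.evenEnd = (1 - B.evenEnd) * B.dEnd := by
  ext1 v
  funext j'
  change B.dEnd (B.evenEnd v) j' = B.dEnd v j' - B.evenEnd (B.dEnd v) j'
  have key : ∀ j, B.D j j' * B.evenEnd v j = if Even (B.h j') then 0 else B.D j j' * v j := by
    intro j
    by_cases h0 : B.D j j' = 0
    · simp [h0]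
    · have h1 := B.hD _ _ h0
      rw [B.evenEnd_apply, h1]
      by_cases h : Even (B.h j') <;> simp [h, Nat.even_add_one]
  rw [B.dEnd_apply, Finset.sum_congr rfl fun j _ => key j, B.evenEnd_apply, B.dEnd_apply]
  by_cases h : Even (B.h j') <;> simp [h]

/-- The sign operator `(-1)^h`. -/
def signEnd : Module.End K (J → MvPolynomial (Fin n) K) := B.evenEnd + B.evenEnd - 1

lemma signEnd_apply (v : J → MvPolynomial (Fin n) K) (j : J) :
    B.signEnd v j = (-1) ^ B.h j * v j := by
  change B.evenEnd v j + B.evenEnd v j - v j = _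
  rw [B.evenEnd_apply]
  by_cases h : Even (B.h j)
  · simp [h]
  · simp [h, (Nat.not_even_iff_odd.1 h).neg_one_pow]

lemma exists_homotopy : ∃ h : Module.End K (J → MvPolynomial (Fin n) K),
    B.dEnd * h + h * B.dEnd = 1 - B.sigEnd ∧ B.signEnd * h + h * B.signEnd = 0 := by
  refine exists_odd_homotopy B.dEnd B.sigEnd B.evenEnd B.dEnd_sq B.dEnd_sigEnd B.sigEnd_dEnd
    B.sigEnd_sq ?_ B.evenEnd_sq B.dEnd_evenEnd B.evenEnd_sigEnd B.sigEnd_evenEnd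
  intro v h1 h2
  refine (B.dEnd_eq_zero_and_iff v).1 ⟨h1, ?_⟩
  rw [mem_toricIdeal_iff_sig, ← B.sigEnd_o, h2]
  rfl

lemma signEnd_sigEnd : B.signEnd * B.sigEnd = B.sigEnd := by
  rw [signEnd, sub_mul, add_mul, B.evenEnd_sigEnd, one_mul, add_sub_cancel_right]

lemma sigEnd_signEnd : B.sigEnd * B.signEnd = B.sigEnd := by
  rw [signEnd, mul_sub, mul_add, B.sigEnd_evenEnd, mul_one, add_sub_cancel_right]

lemma dEnd_signEnd : B.dEnd * B.signEnd + B.signEnd * B.dEnd = 0 := by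
  simp only [signEnd, mul_sub, mul_add, B.dEnd_evenEnd, sub_mul, add_mul, one_mul, mul_one]
  abel

end BRes

/-! ### The polynomial ring of the join as a tensor product -/

section Tensor

variable {K : Type*} [Field K] {m₁ m₂ : ℕ}

/-- The inclusion of the first polynomial ring into that of the join. -/
abbrev inl (K : Type*) [Field K] (m₁ m₂ : ℕ) :
    MvPolynomial (Fin m₁) K →ₐ[K] MvPolynomial (Fin (m₁ + m₂)) K :=
  rename (Fin.castAdd m₂)

/-- The inclusion of the second polynomial ring into that of the join. -/
abbrev inr (K : Type*) [Field K] (m₁ m₂ : ℕ) :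
    MvPolynomial (Fin m₂) K →ₐ[K] MvPolynomial (Fin (m₁ + m₂)) K :=
  rename (Fin.natAdd m₁)

/-- The exponent vector of a product of two monomials in disjoint sets of variables. -/
def expJoin (e : Fin m₁ →₀ ℕ) (f : Fin m₂ →₀ ℕ) : Fin (m₁ + m₂) →₀ ℕ :=
  e.mapDomain (Fin.castAdd m₂) + f.mapDomain (Fin.natAdd m₁)

lemma expJoin_castAdd (e : Fin m₁ →₀ ℕ) (f : Fin m₂ →₀ ℕ) (i : Fin m₁) :
    expJoin e f (Fin.castAdd m₂ i) = e i := by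
  rw [expJoin, Finsupp.add_apply, Finsupp.mapDomain_apply (Fin.castAdd_injective m₁ m₂),
    Finsupp.mapDomain_of_notMem_range, add_zero]
  rintro ⟨k, hk⟩
  have := congrArg Fin.val hk
  simp at this
  omega

lemma expJoin_natAdd (e : Fin m₁ →₀ ℕ) (f : Fin m₂ →₀ ℕ) (i : Fin m₂) :
    expJoin e f (Fin.natAdd m₁ i) = f i := by
  rw [expJoin, Finsupp.add_apply, Finsupp.mapDomain_apply (Fin.natAdd_injective m₂ m₁),
    Finsupp.mapDomain_of_notMem_range, zero_add]
  rintro ⟨k, hk⟩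
  have := congrArg Fin.val hk
  simp at this
  omega

lemma exists_expJoin (e : Fin (m₁ + m₂) →₀ ℕ) : ∃ e₁ e₂, expJoin e₁ e₂ = e := by
  refine ⟨e.comapDomain (Fin.castAdd m₂) (Fin.castAdd_injective m₁ m₂).injOn,
    e.comapDomain (Fin.natAdd m₁) (Fin.natAdd_injective m₂ m₁).injOn, ?_⟩
  ext i
  refine Fin.addCases (fun i => ?_) (fun i => ?_) i
  · rw [expJoin_castAdd, Finsupp.comapDomain_apply]
  · rw [expJoin_natAdd, Finsupp.comapDomain_apply]

lemma inl_mul_inr_monomial (e : Fin m₁ →₀ ℕ) (f : Fin m₂ →₀ ℕ) :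
    inl K m₁ m₂ (monomial e 1) * inr K m₁ m₂ (monomial f 1) = monomial (expJoin e f) 1 := by
  rw [rename_monomial, rename_monomial, monomial_mul, one_mul, expJoin]

variable {J₁ J₂ : Type}

/-- The comparison map from the tensor product over `K` of two free modules to the free module
on the product of their bases over the polynomial ring of the join. -/
def joinMap (K : Type*) [Field K] (m₁ m₂ : ℕ) (J₁ J₂ : Type) :
    TensorProduct K (J₁ → MvPolynomial (Fin m₁) K) (J₂ → MvPolynomial (Fin m₂) K) →ₗ[K]
      (J₁ × J₂ → MvPolynomial (Fin (m₁ + m₂)) K) :=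
  TensorProduct.lift (LinearMap.mk₂ K
    (fun u v x => inl K m₁ m₂ (u x.1) * inr K m₁ m₂ (v x.2))
    (fun u u' v => by ext1 x; simp [add_mul])
    (fun c u v => by ext1 x; simp [map_smul])
    (fun u v v' => by ext1 x; simp [mul_add])
    (fun c u v => by ext1 x; simp [map_smul]))

lemma joinMap_tmul (u : J₁ → MvPolynomial (Fin m₁) K) (v : J₂ → MvPolynomial (Fin m₂) K)
    (x : J₁ × J₂) : joinMap K m₁ m₂ J₁ J₂ (TensorProduct.tmul K u v) x =
      inl K m₁ m₂ (u x.1) * inr K m₁ m₂ (v x.2) := rfl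

variable [Fintype J₁] [Fintype J₂]

/-- The bijection between pairs of monomial basis elements of the two free modules and monomial
basis elements of the free module of the join. -/
def joinIdx (m₁ m₂ : ℕ) (J₁ J₂ : Type) :
    ((Σ _ : J₁, Fin m₁ →₀ ℕ) × (Σ _ : J₂, Fin m₂ →₀ ℕ)) ≃
      (Σ _ : J₁ × J₂, Fin (m₁ + m₂) →₀ ℕ) :=
  Equiv.ofBijective (fun p => ⟨(p.1.1, p.2.1), expJoin p.1.2 p.2.2⟩) (by
    constructor
    · rintro ⟨⟨j₁, e₁⟩, ⟨j₂, e₂⟩⟩ ⟨⟨k₁, f₁⟩, ⟨k₂, f₂⟩⟩ h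
      simp only [Sigma.mk.injEq, Prod.mk.injEq, heq_eq_eq] at h
      obtain ⟨⟨rfl, rfl⟩, h⟩ := h
      have h1 : e₁ = f₁ := by
        ext i
        rw [← expJoin_castAdd e₁ e₂, h, expJoin_castAdd]
      have h2 : e₂ = f₂ := by
        ext i
        rw [← expJoin_natAdd e₁ e₂, h, expJoin_natAdd]
      rw [h1, h2]
    · rintro ⟨⟨j₁, j₂⟩, e⟩
      obtain ⟨e₁, e₂, rfl⟩ := exists_expJoin e
      exact ⟨(⟨j₁, e₁⟩, ⟨j₂, e₂⟩), rfl⟩)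

lemma joinMap_bijective : Function.Bijective (joinMap K m₁ m₂ J₁ J₂) := by
  classical
  let b₁ := Pi.basis fun _ : J₁ => basisMonomials (Fin m₁) K
  let b₂ := Pi.basis fun _ : J₂ => basisMonomials (Fin m₂) K
  let b := Pi.basis fun _ : J₁ × J₂ => basisMonomials (Fin (m₁ + m₂)) K
  have key : joinMap K m₁ m₂ J₁ J₂ =
      ((b₁.tensorProduct b₂).equiv b (joinIdx m₁ m₂ J₁ J₂)).toLinearMap := by
    refine (b₁.tensorProduct b₂).ext ?_
    rintro ⟨⟨j₁, e₁⟩, ⟨j₂, e₂⟩⟩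
    rw [LinearEquiv.coe_coe, Module.Basis.equiv_apply, Module.Basis.tensorProduct_apply]
    have hidx : joinIdx m₁ m₂ J₁ J₂ (⟨j₁, e₁⟩, ⟨j₂, e₂⟩) = ⟨(j₁, j₂), expJoin e₁ e₂⟩ := rfl
    rw [hidx]
    funext x
    rw [joinMap_tmul]
    simp only [b₁, b₂, b, Pi.basis_apply, coe_basisMonomials]
    obtain ⟨x₁, x₂⟩ := x
    by_cases h1 : x₁ = j₁
    · subst h1
      by_cases h2 : x₂ = j₂
      · subst h2
        rw [Pi.single_eq_same, Pi.single_eq_same, Pi.single_eq_same, inl_mul_inr_monomial]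
      · rw [Pi.single_eq_of_ne h2, map_zero, mul_zero, Pi.single_eq_of_ne]
        exact fun h => h2 (congrArg Prod.snd h)
    · rw [Pi.single_eq_of_ne h1, map_zero, zero_mul, Pi.single_eq_of_ne]
      exact fun h => h1 (congrArg Prod.fst h)
  rw [key]
  exact LinearEquiv.bijective _

end Tensor

/-! ### The tensor product of two resolutions -/

section Join

variable {K : Type*} [Field K] {d m₁ m₂ : ℕ}
  {g₁ : Fin m₁ → Fin d → ℕ} {g₂ : Fin m₂ → Fin d → ℕ}

/-- The sum of the two semigroups is direct. -/
def IsDirect (g₁ : Fin m₁ → Fin d → ℕ) (g₂ : Fin m₂ → Fin d → ℕ) : Prop :=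
  ∀ u ∈ affSemigroup g₁, ∀ u' ∈ affSemigroup g₁, ∀ w ∈ affSemigroup g₂,
    ∀ w' ∈ affSemigroup g₂, u + w = u' + w' → u = u' ∧ w = w'

lemma append_comp_castAdd : Fin.append g₁ g₂ ∘ Fin.castAdd m₂ = g₁ :=
  funext fun i => Fin.append_left g₁ g₂ i

lemma append_comp_natAdd : Fin.append g₁ g₂ ∘ Fin.natAdd m₁ = g₂ :=
  funext fun i => Fin.append_right g₁ g₂ i

lemma gammaDeg_expJoin (e : Fin m₁ →₀ ℕ) (f : Fin m₂ →₀ ℕ) :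
    gammaDeg (Fin.append g₁ g₂) (expJoin e f) = gammaDeg g₁ e + gammaDeg g₂ f := by
  rw [expJoin, gammaDeg_add, gammaDeg_mapDomain, gammaDeg_mapDomain, append_comp_castAdd,
    append_comp_natAdd]

lemma mem_append {γ : Fin d → ℕ} (h : γ ∈ affSemigroup (Fin.append g₁ g₂)) :
    ∃ γ₁ ∈ affSemigroup g₁, ∃ γ₂ ∈ affSemigroup g₂, γ = γ₁ + γ₂ := by
  obtain ⟨e, rfl⟩ := exists_gammaDeg h
  obtain ⟨e₁, e₂, rfl⟩ := exists_expJoin e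
  exact ⟨_, gammaDeg_mem g₁ e₁, _, gammaDeg_mem g₂ e₂, gammaDeg_expJoin e₁ e₂⟩

lemma toricMap_inl (p : MvPolynomial (Fin m₁) K) :
    toricMap K (Fin.append g₁ g₂) (inl K m₁ m₂ p) = toricMap K g₁ p := by
  rw [toricMap_rename, append_comp_castAdd]

lemma toricMap_inr (p : MvPolynomial (Fin m₂) K) :
    toricMap K (Fin.append g₁ g₂) (inr K m₁ m₂ p) = toricMap K g₂ p := by
  rw [toricMap_rename, append_comp_natAdd]

/-- As the sum `Γ₁ + Γ₂` is direct, the product of the two normal forms factors through the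
toric map of the join; equivalently, `K[Γ₁] ⊗ K[Γ₂]` embeds into `K[t₁,…,t_d]`. -/
lemma exists_joint_normalForm (hdir : IsDirect g₁ g₂) :
    ∃ ψ : MvPolynomial (Fin d) K →ₗ[K] MvPolynomial (Fin (m₁ + m₂)) K, ∀ p q,
      ψ (toricMap K (Fin.append g₁ g₂) (inl K m₁ m₂ p * inr K m₁ m₂ q)) =
        inl K m₁ m₂ (sig K g₁ p) * inr K m₁ m₂ (sig K g₂ q) := by
  classical
  let F : (Fin d →₀ ℕ) → MvPolynomial (Fin (m₁ + m₂)) K := fun u =>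
    if h : ∃ p : (Fin m₁ →₀ ℕ) × (Fin m₂ →₀ ℕ), gammaDeg g₁ p.1 + gammaDeg g₂ p.2 = u then
      inl K m₁ m₂ (sig K g₁ (monomial h.choose.1 1)) *
        inr K m₁ m₂ (sig K g₂ (monomial h.choose.2 1))
    else 0
  refine ⟨(basisMonomials (Fin d) K).constr K F, fun p q => ?_⟩
  have hmono : ∀ e f, F (Finsupp.equivFunOnFinite.symm
      (gammaDeg (Fin.append g₁ g₂) (expJoin e f))) =
      inl K m₁ m₂ (sig K g₁ (monomial e 1)) * inr K m₁ m₂ (sig K g₂ (monomial f 1)) := by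
    intro e f
    have hex : ∃ p : (Fin m₁ →₀ ℕ) × (Fin m₂ →₀ ℕ), gammaDeg g₁ p.1 + gammaDeg g₂ p.2 =
        Finsupp.equivFunOnFinite.symm (gammaDeg (Fin.append g₁ g₂) (expJoin e f)) :=
      ⟨(e, f), (gammaDeg_expJoin e f).symm⟩
    have hspec := hex.choose_spec
    have hspec' : gammaDeg g₁ hex.choose.1 + gammaDeg g₂ hex.choose.2 =
        gammaDeg g₁ e + gammaDeg g₂ f := hspec.trans (gammaDeg_expJoin e f)
    obtain ⟨h1, h2⟩ := hdir _ (gammaDeg_mem _ _) _ (gammaDeg_mem _ _) _ (gammaDeg_mem _ _) _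
      (gammaDeg_mem _ _) hspec'
    simp only [F]
    rw [dif_pos hex]
    simp only [sig_monomial]
    rw [h1, h2]
  induction p using MvPolynomial.induction_on' with
  | add p p' hp hp' => simp only [map_add, add_mul, hp, hp']
  | monomial e c =>
    have hc : (monomial e c : MvPolynomial (Fin m₁) K) = c • monomial e 1 := by
      rw [smul_monomial, smul_eq_mul, mul_one]
    rw [hc]
    simp only [map_smul, smul_mul_assoc]
    congr 1
    induction q using MvPolynomial.induction_on' with
    | add p p' hp hp' => simp only [map_add, mul_add, hp, hp']
    | monomial f c' =>
      have hc' : (monomial f c' : MvPolynomial (Fin m₂) K) = c' • monomial f 1 := by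
        rw [smul_monomial, smul_eq_mul, mul_one]
      rw [hc']
      simp only [map_smul, mul_smul_comm]
      congr 1
      rw [inl_mul_inr_monomial, toricMap_monomial, constr_monomial, hmono]

variable {J₁ J₂ : Type} [Fintype J₁] [Fintype J₂] (B₁ : BRes K g₁ J₁) (B₂ : BRes K g₂ J₂)

open Classical in
/-- The differential of the tensor product of two resolutions, with the usual sign rule. -/
def joinD (x y : J₁ × J₂) : MvPolynomial (Fin (m₁ + m₂)) K :=
  (if x.2 = y.2 then inl K m₁ m₂ (B₁.D x.1 y.1) else 0) +
    (if x.1 = y.1 then (-1) ^ B₁.h x.1 * inr K m₁ m₂ (B₂.D x.2 y.2) else 0)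

/-- The tensor product differential as a `K`-linear endomorphism. -/
def joinDEnd : Module.End K (J₁ × J₂ → MvPolynomial (Fin (m₁ + m₂)) K) where
  toFun v y := ∑ x, joinD B₁ B₂ x y * v x
  map_add' u v := by
    ext1 j'
    simp [mul_add, Finset.sum_add_distrib]
  map_smul' c v := by
    ext1 j'
    simp [Finset.smul_sum]

/-- The differential of the tensor product of the total modules over `K`. -/
def tensorD : Module.End K
    (TensorProduct K (J₁ → MvPolynomial (Fin m₁) K) (J₂ → MvPolynomial (Fin m₂) K)) :=
  TensorProduct.map B₁.dEnd 1 + TensorProduct.map B₁.signEnd B₂.dEnd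

lemma joinDEnd_joinMap (t) :
    joinDEnd B₁ B₂ (joinMap K m₁ m₂ J₁ J₂ t) = joinMap K m₁ m₂ J₁ J₂ (tensorD B₁ B₂ t) := by
  classical
  induction t using TensorProduct.induction_on with
  | zero => simp
  | add t t' h h' => simp only [map_add, h, h']
  | tmul u v =>
    funext y
    rw [tensorD, LinearMap.add_apply, map_add, TensorProduct.map_tmul, TensorProduct.map_tmul,
      Pi.add_apply, joinMap_tmul, joinMap_tmul]
    change ∑ x, joinD B₁ B₂ x y * joinMap K m₁ m₂ J₁ J₂ (TensorProduct.tmul K u v) x = _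
    simp only [joinD, joinMap_tmul, add_mul, Finset.sum_add_distrib]
    congr 1
    · rw [Fintype.sum_prod_type, B₁.dEnd_apply, map_sum, Finset.sum_mul]
      refine Finset.sum_congr rfl fun x₁ _ => ?_
      rw [Finset.sum_eq_single y.2]
      · simp [mul_assoc]
      · intro x₂ _ h
        simp [h]
      · simp
    · rw [Fintype.sum_prod_type_right, B₂.dEnd_apply, map_sum, Finset.mul_sum]
      refine Finset.sum_congr rfl fun x₂ _ => ?_
      rw [Finset.sum_eq_single y.1]
      · rw [B₁.signEnd_apply]
        simp only [if_true, map_mul, map_pow, map_neg, map_one]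
        ring
      · intro x₁ _ h
        simp [h]
      · simp

lemma tensorD_sq (t) : tensorD B₁ B₂ (tensorD B₁ B₂ t) = 0 := by
  have : tensorD B₁ B₂ * tensorD B₁ B₂ = 0 := by
    simp only [tensorD, mul_add, add_mul, ← TensorProduct.map_mul, one_mul, mul_one, B₁.dEnd_sq,
      B₂.dEnd_sq, TensorProduct.map_zero_left, TensorProduct.map_zero_right, add_zero, zero_add]
    rw [← TensorProduct.map_add_left, add_comm, B₁.dEnd_signEnd, TensorProduct.map_zero_left]
  exact LinearMap.congr_fun this t

lemma joinMap_sig_tmul_ne (t) (x : J₁ × J₂) (hx : x ≠ (B₁.o, B₂.o)) :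
    joinMap K m₁ m₂ J₁ J₂ (TensorProduct.map B₁.sigEnd B₂.sigEnd t) x = 0 := by
  induction t using TensorProduct.induction_on with
  | zero => simp
  | add t t' h h' => rw [map_add, map_add, Pi.add_apply, h, h', add_zero]
  | tmul u v =>
    rw [TensorProduct.map_tmul, joinMap_tmul]
    by_cases h1 : x.1 = B₁.o
    · have h2 : x.2 ≠ B₂.o := fun h => hx (Prod.ext h1 h)
      rw [B₂.sigEnd_of_ne _ h2, map_zero, mul_zero]
    · rw [B₁.sigEnd_of_ne _ h1, map_zero, zero_mul]

lemma joinMap_sig_eq_zero (hdir : IsDirect g₁ g₂) (t)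
    (ht : joinMap K m₁ m₂ J₁ J₂ t (B₁.o, B₂.o) ∈ toricIdeal K (Fin.append g₁ g₂)) :
    joinMap K m₁ m₂ J₁ J₂ (TensorProduct.map B₁.sigEnd B₂.sigEnd t) = 0 := by
  funext x
  by_cases hx : x = (B₁.o, B₂.o)
  · subst hx
    obtain ⟨ψ, hψ⟩ := exists_joint_normalForm (K := K) hdir
    have key : ∀ t, joinMap K m₁ m₂ J₁ J₂ (TensorProduct.map B₁.sigEnd B₂.sigEnd t)
        (B₁.o, B₂.o) = ψ (toricMap K (Fin.append g₁ g₂)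
          (joinMap K m₁ m₂ J₁ J₂ t (B₁.o, B₂.o))) := by
      intro t
      induction t using TensorProduct.induction_on with
      | zero => simp
      | add t t' h h' => simp only [map_add, Pi.add_apply, h, h']
      | tmul u v =>
        rw [TensorProduct.map_tmul, joinMap_tmul, joinMap_tmul, hψ, B₁.sigEnd_o, B₂.sigEnd_o]
    rw [key, mem_toricIdeal.1 ht, map_zero]
    rfl
  · exact joinMap_sig_tmul_ne B₁ B₂ t x hx

/-- Exactness of the tensor product of two resolutions. -/
lemma join_exact (hdir : IsDirect g₁ g₂) (v : J₁ × J₂ → MvPolynomial (Fin (m₁ + m₂)) K) :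
    (joinDEnd B₁ B₂ v = 0 ∧ v (B₁.o, B₂.o) ∈ toricIdeal K (Fin.append g₁ g₂)) ↔
      ∃ w, joinDEnd B₁ B₂ w = v := by
  obtain ⟨hinj, hsurj⟩ := joinMap_bijective (K := K) (m₁ := m₁) (m₂ := m₂) (J₁ := J₁) (J₂ := J₂)
  constructor
  · rintro ⟨h1, h2⟩
    obtain ⟨t, rfl⟩ := hsurj v
    obtain ⟨η₁, H₁, A₁⟩ := B₁.exists_homotopy
    obtain ⟨η₂, H₂, -⟩ := B₂.exists_homotopy
    have key := LinearMap.congr_fun (tensor_homotopy B₁.dEnd B₁.sigEnd B₁.signEnd η₁ B₂.dEnd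
      B₂.sigEnd η₂ H₁ H₂ A₁ B₁.signEnd_sigEnd B₁.sigEnd_signEnd B₁.dEnd_sigEnd B₁.sigEnd_dEnd) t
    rw [joinDEnd_joinMap] at h1
    have h3 : tensorD B₁ B₂ t = 0 := hinj (by rw [h1, map_zero])
    have h4 : TensorProduct.map B₁.sigEnd B₂.sigEnd t = 0 :=
      hinj (by rw [joinMap_sig_eq_zero B₁ B₂ hdir t h2, map_zero])
    let H : Module.End K (TensorProduct K (J₁ → MvPolynomial (Fin m₁) K)
        (J₂ → MvPolynomial (Fin m₂) K)) :=
      TensorProduct.map η₁ 1 + TensorProduct.map B₁.sigEnd η₂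
    change tensorD B₁ B₂ (H t) + H (tensorD B₁ B₂ t) =
      t - TensorProduct.map B₁.sigEnd B₂.sigEnd t at key
    rw [h3, h4, map_zero, add_zero, sub_zero] at key
    exact ⟨joinMap K m₁ m₂ J₁ J₂ (H t), by rw [joinDEnd_joinMap, key]⟩
  · rintro ⟨w, rfl⟩
    obtain ⟨t, rfl⟩ := hsurj w
    constructor
    · rw [joinDEnd_joinMap, joinDEnd_joinMap, tensorD_sq, map_zero]
    · refine Ideal.sum_mem _ fun x _ => Ideal.mul_mem_right _ _ ?_
      refine Ideal.add_mem _ ?_ ?_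
      · split_ifs with h
        · rw [mem_toricIdeal, toricMap_inl]
          exact mem_toricIdeal.1 (B₁.D_mem x.1)
        · exact zero_mem _
      · split_ifs with h
        · refine Ideal.mul_mem_left _ _ ?_
          rw [mem_toricIdeal, toricMap_inr]
          exact mem_toricIdeal.1 (B₂.D_mem x.2)
        · exact zero_mem _

lemma exists_of_mem_support_joinD {x y : J₁ × J₂} {e : Fin (m₁ + m₂) →₀ ℕ}
    (he : e ∈ (joinD B₁ B₂ x y).support) :
    (x.2 = y.2 ∧ ∃ e₁ ∈ (B₁.D x.1 y.1).support, e₁.mapDomain (Fin.castAdd m₂) = e) ∨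
      (x.1 = y.1 ∧ ∃ e₂ ∈ (B₂.D x.2 y.2).support, e₂.mapDomain (Fin.natAdd m₁) = e) := by
  classical
  rcases Finset.mem_union.1 (support_add he) with h | h
  · left
    split_ifs at h with hx
    · rw [support_rename_of_injective (Fin.castAdd_injective m₁ m₂)] at h
      obtain ⟨e₁, h1, h2⟩ := Finset.mem_image.1 h
      exact ⟨hx, e₁, h1, h2⟩
    · simp at h
  · right
    split_ifs at h with hx
    · have h' : e ∈ (inr K m₁ m₂ (B₂.D x.2 y.2)).support := by
        rcases neg_one_pow_eq_or (MvPolynomial (Fin (m₁ + m₂)) K) (B₁.h x.1) with hs | hs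
        · rwa [hs, one_mul] at h
        · rwa [hs, neg_one_mul, support_neg] at h
      rw [support_rename_of_injective (Fin.natAdd_injective m₂ m₁)] at h'
      obtain ⟨e₁, h1, h2⟩ := Finset.mem_image.1 h'
      exact ⟨hx, e₁, h1, h2⟩
    · simp at h

/-- The tensor product of minimal resolutions of `K[Γ₁]` and `K[Γ₂]` is a minimal resolution of
the semigroup ring of the join. -/
def BRes.join (hdir : IsDirect g₁ g₂) : BRes K (Fin.append g₁ g₂) (J₁ × J₂) where
  h x := B₁.h x.1 + B₂.h x.2
  s x := B₁.s x.1 + B₂.s x.2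
  D := joinD B₁ B₂
  o := (B₁.o, B₂.o)
  h_eq_zero x := by
    rw [Nat.add_eq_zero_iff, B₁.h_eq_zero, B₂.h_eq_zero, Prod.ext_iff]
  s_o := by rw [B₁.s_o, B₂.s_o, add_zero]
  hD x y hxy := by
    obtain ⟨e, he⟩ := support_nonempty.2 hxy
    rcases exists_of_mem_support_joinD B₁ B₂ he with ⟨hx, e₁, h1, -⟩ | ⟨hx, e₁, h1, -⟩
    · have := B₁.hD _ _ (support_nonempty.1 ⟨e₁, h1⟩)
      rw [hx]
      omega
    · have := B₂.hD _ _ (support_nonempty.1 ⟨e₁, h1⟩)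
      rw [hx]
      omega
  homog x y e he := by
    rcases exists_of_mem_support_joinD B₁ B₂ he with ⟨hx, e₁, h1, rfl⟩ | ⟨hx, e₁, h1, rfl⟩
    · rw [gammaDeg_mapDomain, append_comp_castAdd, B₁.homog _ _ _ h1, hx, add_assoc]
    · rw [gammaDeg_mapDomain, append_comp_natAdd, B₂.homog _ _ _ h1, hx]
      abel
  minimal x y := by
    by_contra h
    rcases exists_of_mem_support_joinD B₁ B₂ (mem_support_iff.2 h) with
      ⟨hx, e₁, h1, h2⟩ | ⟨hx, e₁, h1, h2⟩
    · have : e₁ = 0 := Finsupp.mapDomain_injective (Fin.castAdd_injective m₁ m₂)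
        (h2.trans Finsupp.mapDomain_zero.symm)
      rw [this] at h1
      exact mem_support_iff.1 h1 (B₁.minimal _ _)
    · have : e₁ = 0 := Finsupp.mapDomain_injective (Fin.natAdd_injective m₂ m₁)
        (h2.trans Finsupp.mapDomain_zero.symm)
      rw [this] at h1
      exact mem_support_iff.1 h1 (B₂.minimal _ _)
  exact v := by
    have := join_exact B₁ B₂ hdir v
    rw [funext_iff] at this
    refine Iff.trans this (exists_congr fun w => ?_)
    rw [funext_iff]
    exact forall_congr' fun j => eq_comm

/-- In a strongly indispensable resolution no generator lies `Γ`-above a generator of larger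
homological degree: descending from the latter would give two comparable generators in the same
homological degree. -/
lemma BRes.SI.not_above {a : Fin m₁ → Fin d → ℕ} {J : Type} [Fintype J] {B : BRes K a J}
    (hB : B.SI) (ha : ∀ i, a i ≠ 0) {j k : J} (hjk : B.h j < B.h k) {γ : Fin d → ℕ}
    (hγ : γ ∈ affSemigroup a) : B.s j ≠ γ + B.s k := by
  intro hs
  obtain ⟨k', hk', δ, hδ, hδ0, hs'⟩ := B.exists_descent ha k (B.h j) hjk
  rw [hs', ← add_assoc] at hs
  by_cases h : j = k'
  · subst h
    have h0 : γ + δ = 0 := by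
      have : 0 + B.s j = γ + δ + B.s j := by rw [zero_add]; exact hs
      exact (add_right_cancel this).symm
    exact hδ0 (add_eq_zero.1 h0).2
  · exact hB j k' h hk'.symm _ (add_mem hγ hδ) hs

lemma BRes.join_SI (hdir : IsDirect g₁ g₂) (hg₁ : ∀ i, g₁ i ≠ 0) (hg₂ : ∀ i, g₂ i ≠ 0)
    (h₁ : B₁.SI) (h₂ : B₂.SI) : (B₁.join B₂ hdir).SI := by
  rintro ⟨j₁, j₂⟩ ⟨k₁, k₂⟩ hne hh γ hγ hs
  obtain ⟨γ₁, hγ₁, γ₂, hγ₂, rfl⟩ := mem_append hγ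
  change B₁.h j₁ + B₂.h j₂ = B₁.h k₁ + B₂.h k₂ at hh
  change B₁.s j₁ + B₂.s j₂ = γ₁ + γ₂ + (B₁.s k₁ + B₂.s k₂) at hs
  obtain ⟨e₁, e₂⟩ := hdir _ (B₁.s_mem hg₁ j₁) (γ₁ + B₁.s k₁)
    (add_mem hγ₁ (B₁.s_mem hg₁ k₁)) _ (B₂.s_mem hg₂ j₂) (γ₂ + B₂.s k₂)
    (add_mem hγ₂ (B₂.s_mem hg₂ k₂)) (by rw [hs]; abel)
  rcases lt_trichotomy (B₁.h j₁) (B₁.h k₁) with h | h | h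
  · exact h₁.not_above hg₁ h hγ₁ e₁
  · by_cases hj₁ : j₁ = k₁
    · have hj₂ : j₂ ≠ k₂ := fun h' => hne (by rw [hj₁, h'])
      exact h₂ _ _ hj₂ (by omega) _ hγ₂ e₂
    · exact h₁ _ _ hj₁ h _ hγ₁ e₁
  · exact h₂.not_above hg₂ (show B₂.h j₂ < B₂.h k₂ by omega) hγ₂ e₂

lemma HasSIFR.join (hdir : IsDirect g₁ g₂) (hg₁ : ∀ i, g₁ i ≠ 0) (hg₂ : ∀ i, g₂ i ≠ 0)
    (h₁ : HasSIFR K g₁) (h₂ : HasSIFR K g₂) : HasSIFR K (Fin.append g₁ g₂) := by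
  obtain ⟨J₁, _, B₁, hB₁⟩ := h₁.exists_BRes
  obtain ⟨J₂, _, B₂, hB₂⟩ := h₂.exists_BRes
  exact hasSIFR_of_BRes (B₁.join B₂ hdir) (B₁.join_SI B₂ hdir hg₁ hg₂ hB₁ hB₂)

/-! ### The two summands are faces of the join -/

lemma append_ne_zero (hg₁ : ∀ i, g₁ i ≠ 0) (hg₂ : ∀ i, g₂ i ≠ 0) (i : Fin (m₁ + m₂)) :
    Fin.append g₁ g₂ i ≠ 0 := by
  refine Fin.addCases (fun i => ?_) (fun i => ?_) i
  · rw [Fin.append_left]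
    exact hg₁ i
  · rw [Fin.append_right]
    exact hg₂ i

lemma isFace_castAdd (hdir : IsDirect g₁ g₂) (hg₂ : ∀ i, g₂ i ≠ 0) :
    IsFace (Fin.append g₁ g₂) (Fin.castAdd m₂) := by
  intro e he
  rw [append_comp_castAdd] at he
  obtain ⟨e₁, e₂, rfl⟩ := exists_expJoin e
  rw [gammaDeg_expJoin] at he
  have h := (hdir _ (gammaDeg_mem g₁ e₁) _ he _ (gammaDeg_mem g₂ e₂) 0 (zero_mem _)
    (add_zero _).symm).2
  rw [gammaDeg_eq_zero hg₂ h]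
  intro i
  refine Fin.addCases (fun i => ?_) (fun i => ?_) i
  · intro _
    exact ⟨i, rfl⟩
  · intro hi
    rw [Finset.mem_coe, Finsupp.mem_support_iff, expJoin_natAdd] at hi
    exact absurd rfl hi

lemma isFace_natAdd (hdir : IsDirect g₁ g₂) (hg₁ : ∀ i, g₁ i ≠ 0) :
    IsFace (Fin.append g₁ g₂) (Fin.natAdd m₁) := by
  intro e he
  rw [append_comp_natAdd] at he
  obtain ⟨e₁, e₂, rfl⟩ := exists_expJoin e
  rw [gammaDeg_expJoin] at he
  have h := (hdir _ (gammaDeg_mem g₁ e₁) 0 (zero_mem _) _ (gammaDeg_mem g₂ e₂) _ he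
    (zero_add _).symm).1
  rw [gammaDeg_eq_zero hg₁ h]
  intro i
  refine Fin.addCases (fun i => ?_) (fun i => ?_) i
  · intro hi
    rw [Finset.mem_coe, Finsupp.mem_support_iff, expJoin_castAdd] at hi
    exact absurd rfl hi
  · intro _
    exact ⟨i, rfl⟩

end Join

/-- Linear independence of the extremal rays makes the sum of the two semigroups direct. -/
lemma isDirect_of_rays {r r₁ n₁ r₂ n₂ : ℕ}
    (g₁ : Fin (r₁ + n₁) → Fin r → ℕ) (g₂ : Fin (r₂ + n₂) → Fin r → ℕ)
    (hray₁ : ∀ v ∈ affSemigroup g₁, ∃ c : Fin r₁ → ℚ, (∀ t, 0 ≤ c t) ∧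
      ∀ j, (v j : ℚ) = ∑ t, c t * (g₁ (Fin.castAdd n₁ t) j : ℚ))
    (hray₂ : ∀ v ∈ affSemigroup g₂, ∃ c : Fin r₂ → ℚ, (∀ t, 0 ≤ c t) ∧
      ∀ j, (v j : ℚ) = ∑ t, c t * (g₂ (Fin.castAdd n₂ t) j : ℚ))
    (hindep : LinearIndependent ℚ
      (Sum.elim (fun t : Fin r₁ => fun j => (g₁ (Fin.castAdd n₁ t) j : ℚ))
        (fun t : Fin r₂ => fun j => (g₂ (Fin.castAdd n₂ t) j : ℚ)))) :
    IsDirect g₁ g₂ := by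
  intro u hu u' hu' w hw w' hw' huw
  obtain ⟨c, -, hc⟩ := hray₁ u hu
  obtain ⟨c', -, hc'⟩ := hray₁ u' hu'
  obtain ⟨b, -, hb⟩ := hray₂ w hw
  obtain ⟨b', -, hb'⟩ := hray₂ w' hw'
  have key := Fintype.linearIndependent_iff.1 hindep (Sum.elim (c - c') (b - b')) (by
    funext j
    rw [Fintype.sum_sum_type]
    simp only [Sum.elim_inl, Sum.elim_inr, Pi.add_apply, Finset.sum_apply, Pi.smul_apply,
      Pi.sub_apply, smul_eq_mul, sub_mul, Finset.sum_sub_distrib, Pi.zero_apply]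
    rw [← hc, ← hc', ← hb, ← hb']
    have h : (u j : ℚ) + w j = u' j + w' j := by
      have := congrFun huw j
      simp only [Pi.add_apply] at this
      exact_mod_cast this
    linarith)
  have hu2 : u = u' := by
    funext j
    have : (u j : ℚ) = u' j := by
      rw [hc, hc']
      refine Finset.sum_congr rfl fun t _ => ?_
      have := key (Sum.inl t)
      simp only [Sum.elim_inl, Pi.sub_apply, sub_eq_zero] at this
      rw [this]
    exact_mod_cast this
  refine ⟨hu2, ?_⟩
  rw [hu2] at huw
  exact add_left_cancel huw

theorem join_has_SIFR_iff
    {K : Type*} [Field K] {r r₁ n₁ r₂ n₂ : ℕ}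
    (g₁ : Fin (r₁ + n₁) → Fin r → ℕ) (g₂ : Fin (r₂ + n₂) → Fin r → ℕ)
    -- `Γ₁`, `Γ₂` are minimally generated by `𝒢₁`, `𝒢₂`:
    (hmin₁ : ∀ i, g₁ i ∉ AddSubmonoid.closure (Set.range g₁ \ {g₁ i}))
    (hmin₂ : ∀ i, g₂ i ∉ AddSubmonoid.closure (Set.range g₂ \ {g₂ i}))
    -- the generating sets are disjoint:
    (hdisj : Disjoint (Set.range g₁) (Set.range g₂))
    -- the first `r₁` (resp. `r₂`) generators are the extremal rays: every element of
    -- `Γ₁` (resp. `Γ₂`) is a non-negative rational combination of them: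
    (hray₁ : ∀ v ∈ affSemigroup g₁, ∃ c : Fin r₁ → ℚ, (∀ t, 0 ≤ c t) ∧
      ∀ j, (v j : ℚ) = ∑ t, c t * (g₁ (Fin.castAdd n₁ t) j : ℚ))
    (hray₂ : ∀ v ∈ affSemigroup g₂, ∃ c : Fin r₂ → ℚ, (∀ t, 0 ≤ c t) ∧
      ∀ j, (v j : ℚ) = ∑ t, c t * (g₂ (Fin.castAdd n₂ t) j : ℚ))
    -- `E_{Γ₁} ∪ E_{Γ₂}` is linearly independent over `ℚ`:
    (hindep : LinearIndependent ℚ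
      (Sum.elim (fun t : Fin r₁ => fun j => (g₁ (Fin.castAdd n₁ t) j : ℚ))
        (fun t : Fin r₂ => fun j => (g₂ (Fin.castAdd n₂ t) j : ℚ)))) :
    -- then the join `Γ = Γ₁ ⊔ Γ₂` has a SIFR iff both `Γ₁` and `Γ₂` have SIFRs:
    HasSIFR K (Fin.append g₁ g₂) ↔ HasSIFR K g₁ ∧ HasSIFR K g₂ := by
  have hdir := isDirect_of_rays g₁ g₂ hray₁ hray₂ hindep
  -- a minimal generator is nonzero, as `0` lies in every submonoid
  have hg₁ : ∀ i, g₁ i ≠ 0 := fun i h =>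
    hmin₁ i (Eq.mpr (congrArg (· ∈ _) h) (zero_mem _))
  have hg₂ : ∀ i, g₂ i ≠ 0 := fun i h =>
    hmin₂ i (Eq.mpr (congrArg (· ∈ _) h) (zero_mem _))
  constructor
  · intro h
    have k₁ := h.restrict (append_ne_zero hg₁ hg₂) (Fin.castAdd_injective _ _)
      (isFace_castAdd hdir hg₂)
    have k₂ := h.restrict (append_ne_zero hg₁ hg₂) (Fin.natAdd_injective _ _)
      (isFace_natAdd hdir hg₁)
    rw [append_comp_castAdd] at k₁
    rw [append_comp_natAdd] at k₂
    exact ⟨k₁, k₂⟩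
  · rintro ⟨h₁, h₂⟩
    exact HasSIFR.join hdir hg₁ hg₂ h₁ h₂
end
end

section
/- Let Γ₁, Γ₂ ⊆ ℕ^r be affine semigroups whose join Γ = Γ₁ ⊔ Γ₂ is defined. Fix j ∈ {1,2} and let b, b′ ∈ Γⱼ. Then b − b′ ∈ Γ if and only if b − b′ ∈ Γⱼ. In particular, for b, b′ ∈ Γ₁, if b − b′ = γ₁ + γ₂ with γ₁ ∈ Γ₁ and γ₂ ∈ Γ₂, then γ₂ = 0. -/
/-!
The rational span `U` of the extremal rays of `Γ₁` contains `Γ₁`, the rational span `V` of those of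
`Γ₂` contains `Γ₂`, and linear independence of all the rays together says that `U ∩ V = 0`.  If
`b = b' + γ₁ + γ₂` with `b, b', γ₁ ∈ Γ₁` and `γ₂ ∈ Γ₂`, then `γ₂ = b - b' - γ₁` lies in
`U ∩ V`, so `γ₂ = 0` (`eq_zero_of_cast_mem_disjoint`).  Since every element of the join is of the
form `γ₁ + γ₂` (`affSemigroup_append`), all the claims follow.
-/

open MvPolynomial

noncomputable section

set_option synthInstance.maxHeartbeats 1000000
set_option maxHeartbeats 1000000

/-- The embedding `ℕ^d → ℚ^d`. -/
def castVec {d : ℕ} (v : Fin d → ℕ) : Fin d → ℚ := fun j => (v j : ℚ)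

lemma affSemigroup_append {m n d : ℕ} (a : Fin m → Fin d → ℕ) (b : Fin n → Fin d → ℕ) :
    affSemigroup (Fin.append a b) = affSemigroup a ⊔ affSemigroup b := by
  unfold affSemigroup
  rw [← AddSubmonoid.closure_union]
  congr 1
  ext v
  constructor
  · rintro ⟨i, rfl⟩
    refine Fin.addCases (fun i => ?_) (fun i => ?_) i
    · exact Or.inl ⟨i, by simp⟩
    · exact Or.inr ⟨i, by simp⟩
  · rintro (⟨i, rfl⟩ | ⟨i, rfl⟩)
    · exact ⟨Fin.castAdd n i, by simp⟩
    · exact ⟨Fin.natAdd m i, by simp⟩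

lemma castVec_mem_span {d k : ℕ} {e : Fin k → Fin d → ℚ} {v : Fin d → ℕ}
    (h : ∃ c : Fin k → ℚ, (∀ t, 0 ≤ c t) ∧ ∀ j, (v j : ℚ) = ∑ t, c t * e t j) :
    castVec v ∈ Submodule.span ℚ (Set.range e) := by
  obtain ⟨c, -, hc⟩ := h
  have : castVec v = ∑ t, c t • e t := by
    ext j
    simp [castVec, hc]
  rw [this]
  exact Submodule.sum_mem _ fun t _ =>
    Submodule.smul_mem _ _ (Submodule.subset_span ⟨t, rfl⟩)

/-- An element `y` of the second semigroup that is a difference of elements of the first one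
vanishes, as soon as the two semigroups lie in subspaces meeting only in `0`. -/
lemma eq_zero_of_cast_mem_disjoint {d : ℕ} {U V : Submodule ℚ (Fin d → ℚ)} (hUV : Disjoint U V)
    {S T : AddSubmonoid (Fin d → ℕ)} (hS : ∀ v ∈ S, castVec v ∈ U) (hT : ∀ v ∈ T, castVec v ∈ V)
    {b b' x y : Fin d → ℕ} (hb : b ∈ S) (hb' : b' ∈ S) (hx : x ∈ S) (hy : y ∈ T)
    (h : b = b' + x + y) : y = 0 := by
  have hyU : castVec y ∈ U := by
    have : castVec y = castVec b - castVec b' - castVec x := by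
      ext j
      simp only [castVec, h, Pi.sub_apply, Pi.add_apply]
      push_cast
      ring
    rw [this]
    exact U.sub_mem (U.sub_mem (hS _ hb) (hS _ hb')) (hS _ hx)
  have h0 := Submodule.disjoint_def.1 hUV _ hyU (hT _ hy)
  ext j
  simpa [castVec] using congrFun h0 j

lemma difference_mem_sup_iff {d : ℕ} {U V : Submodule ℚ (Fin d → ℚ)} (hUV : Disjoint U V)
    {S T : AddSubmonoid (Fin d → ℕ)} (hS : ∀ v ∈ S, castVec v ∈ U) (hT : ∀ v ∈ T, castVec v ∈ V)
    {b b' : Fin d → ℕ} (hb : b ∈ S) (hb' : b' ∈ S) :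
    (∃ γ ∈ S ⊔ T, b = b' + γ) ↔ ∃ γ ∈ S, b = b' + γ := by
  constructor
  · rintro ⟨γ, hγ, h⟩
    obtain ⟨x, hx, y, hy, rfl⟩ := AddSubmonoid.mem_sup.1 hγ
    have hy0 := eq_zero_of_cast_mem_disjoint hUV hS hT hb hb' hx hy (by rw [h, add_assoc])
    exact ⟨x, hx, by rw [h, hy0, add_zero]⟩
  · rintro ⟨γ, hγ, h⟩
    exact ⟨γ, (le_sup_left : S ≤ S ⊔ T) hγ, h⟩

theorem difference_in_join_iff
    {r r₁ n₁ r₂ n₂ : ℕ}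
    (g₁ : Fin (r₁ + n₁) → Fin r → ℕ) (g₂ : Fin (r₂ + n₂) → Fin r → ℕ)
    -- `Γ₁`, `Γ₂` are minimally generated by `𝒢₁`, `𝒢₂`:
    (hmin₁ : ∀ i, g₁ i ∉ AddSubmonoid.closure (Set.range g₁ \ {g₁ i}))
    (hmin₂ : ∀ i, g₂ i ∉ AddSubmonoid.closure (Set.range g₂ \ {g₂ i}))
    -- the generating sets are disjoint:
    (hdisj : Disjoint (Set.range g₁) (Set.range g₂))
    -- the first `r₁` (resp. `r₂`) generators are the extremal rays: every element of
    -- `Γ₁` (resp. `Γ₂`) is a non-negative rational combination of them: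
    (hray₁ : ∀ v ∈ affSemigroup g₁, ∃ c : Fin r₁ → ℚ, (∀ t, 0 ≤ c t) ∧
      ∀ j, (v j : ℚ) = ∑ t, c t * (g₁ (Fin.castAdd n₁ t) j : ℚ))
    (hray₂ : ∀ v ∈ affSemigroup g₂, ∃ c : Fin r₂ → ℚ, (∀ t, 0 ≤ c t) ∧
      ∀ j, (v j : ℚ) = ∑ t, c t * (g₂ (Fin.castAdd n₂ t) j : ℚ))
    -- `E_{Γ₁} ∪ E_{Γ₂}` is linearly independent over `ℚ`:
    (hindep : LinearIndependent ℚ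
      (Sum.elim (fun t : Fin r₁ => fun j => (g₁ (Fin.castAdd n₁ t) j : ℚ))
        (fun t : Fin r₂ => fun j => (g₂ (Fin.castAdd n₂ t) j : ℚ)))) :
    -- for `b, b′ ∈ Γⱼ` (`j = 1, 2`): `b − b′ ∈ Γ = Γ₁ ⊔ Γ₂` iff `b − b′ ∈ Γⱼ`;
    -- in particular for `b, b′ ∈ Γ₁`, if `b − b′ = γ₁ + γ₂` with `γᵢ ∈ Γᵢ` then `γ₂ = 0`:
    (∀ b ∈ affSemigroup g₁, ∀ b' ∈ affSemigroup g₁,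
      ((∃ γ ∈ affSemigroup (Fin.append g₁ g₂), b = b' + γ) ↔
        (∃ γ ∈ affSemigroup g₁, b = b' + γ))) ∧
    (∀ b ∈ affSemigroup g₂, ∀ b' ∈ affSemigroup g₂,
      ((∃ γ ∈ affSemigroup (Fin.append g₁ g₂), b = b' + γ) ↔
        (∃ γ ∈ affSemigroup g₂, b = b' + γ))) ∧
    (∀ b ∈ affSemigroup g₁, ∀ b' ∈ affSemigroup g₁,
      ∀ γ₁ ∈ affSemigroup g₁, ∀ γ₂ ∈ affSemigroup g₂,
        b = b' + γ₁ + γ₂ → γ₂ = 0) := by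
  have hd := (linearIndependent_sum.1 hindep).2.2
  simp only [Sum.elim_comp_inl, Sum.elim_comp_inr] at hd
  have h₁ := fun v hv => castVec_mem_span (hray₁ v hv)
  have h₂ := fun v hv => castVec_mem_span (hray₂ v hv)
  rw [affSemigroup_append]
  refine ⟨fun b hb b' hb' => difference_mem_sup_iff hd h₁ h₂ hb hb', fun b hb b' hb' => ?_,
    fun b hb b' hb' x hx y hy h => eq_zero_of_cast_mem_disjoint hd h₁ h₂ hb hb' hx hy h⟩
  rw [sup_comm]
  exact difference_mem_sup_iff hd.symm h₂ h₁ hb hb'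
end
end
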